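/- (Endgame Lemma) Let η ∈ (0, 1/2] and κ > 0. Let X, Y be independent finitely supported random variables on G = 𝔽₂ⁿ with s[X; Y] ≥ η (H[X] + H[Y]). Let X₁, X₂ and Y₁, Y₂ be mutually independent copies of X and Y, and suppose: (i) s[X₁ + X₂; Y₁ + Y₂] ≤ η (H[X₁ + X₂] + H[Y₁ + Y₂]) + κ; (ii) s[X₁ + Y₂; X₂ + Y₁] ≤ η (H[X₁ + Y₂] + H[X₂ + Y₁]) + κ; (iii) s[X₁ | X₁ + X₂; Y₁ | Y₁ + Y₂] ≤ η (H[X₁ | X₁ + X₂] + H[Y₁ | Y₁ + Y₂]) + κ; (iv) s[X₁ | X₁ + Y₂; Y₁ | Y₁ + X₂] ≤ η (H[X₁ | X₁ + Y₂] + H[Y₁ | Y₁ + X₂]) + κ. For (u, w) in supp(X₁ + Y₂) × supp(Y₁ + X₂), let X_u = (X₁ | X₁ + Y₂ = u) and Y_w = (Y₁ | Y₁ + X₂ = w). Then for each (u, w) there is a subspace V(u, w) ⊆ G such that H[𝐔_{V(u,w)}] ≤ 7 (H[X_u] + H[Y_w]) and 𝔼_{u ∼ X₁+Y₂, w ∼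 Y₁+X₂} (H[π_{V(u,w)}(X_u)] + H[π_{V(u,w)}(Y_w)]) ≤ 480 κ. -/

import Mathlib

open Real Pointwise

noncomputable section

abbrev Fvec (n : ℕ) : Type := Fin n → ZMod 2

/-- Shannon entropy (natural log) of a finitely supported distribution. -/
def ent {A : Type*} (p : A → ℝ) : ℝ := ∑ᶠ a, Real.negMulLog (p a)

/-- `p` is a (finitely supported) probability distribution. -/
def IsDist {A : Type*} (p : A → ℝ) : Prop := (∀ a, 0 ≤ p a) ∧ ∑ᶠ a, p a = 1

/-- Pushforward of a distribution along a map: the distribution of `f(X)` for `X ∼ p`. -/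
def push {A B : Type*} (f : A → B) (p : A → ℝ) : B → ℝ := fun b => ∑ᶠ a ∈ f ⁻¹' {b}, p a

/-- Joint distribution of a pair of independent random variables. -/
def prodDist {A B : Type*} (p : A → ℝ) (q : B → ℝ) : A × B → ℝ := fun z => p z.1 * q z.2

/-- Distribution of `X + Y` for independent `X ∼ p`, `Y ∼ q`. -/
def conv {A : Type*} [AddGroup A] (p q : A → ℝ) : A → ℝ := fun z => ∑ᶠ x, p x * q (z - x)

/-- The distribution of `X` conditioned on `U = b`, where `r` is the joint distribution of `(X, U)`. -/
def fiber {A B : Type*} (r : A × B → ℝ) (b : B) : A → ℝ := fun a => r (a, b) / push Prod.snd r b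

/-- Conditional entropy `H[X | U]` of a joint distribution `r` of `(X, U)`. -/
def condEnt {A B : Type*} (r : A × B → ℝ) : ℝ := ∑ᶠ b, push Prod.snd r b * ent (fiber r b)

/-- Doubling mass `s[X ; Y]` (of independent copies with distributions `p`, `q`). -/
def sDouble {A : Type*} [AddGroup A] (p q : A → ℝ) : ℝ := ent p + ent q - ent (conv p q)

/-- Conditional doubling mass `s[X | U ; Y | W] = 𝔼_{u ∼ U, w ∼ W} s[X_u ; Y_w]`,
where `r1`, `r2` are the joint distributions of `(X, U)` and `(Y, W)`. -/
def sCond {A U W : Type*} [AddGroup A] (r1 : A × U → ℝ) (r2 : A × W → ℝ) : ℝ :=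
  ∑ᶠ u, ∑ᶠ w, push Prod.snd r1 u * push Prod.snd r2 w * sDouble (fiber r1 u) (fiber r2 w)

/-- Conditional mutual information `I[A : B | S]` of a joint distribution of `(A, B, S)`. -/
def condMI {A B S : Type*} (r : A × B × S → ℝ) : ℝ :=
  ent (push (fun z => (z.1, z.2.2)) r) + ent (push (fun z => z.2) r)
    - ent r - ent (push (fun z => z.2.2) r)

/-- Uniform distribution on a set. -/
def unifOn {A : Type*} (s : Set A) : A → ℝ := s.indicator fun _ => (Nat.card s : ℝ)⁻¹

/-- Entropic Ruzsa distance `d[X ; Y]`. -/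
def dRuzsa {A : Type*} [AddGroup A] (p q : A → ℝ) : ℝ := ent (conv p q) - ent p / 2 - ent q / 2

/-- Joint distribution of `(X, X + Y)` for independent `X ∼ p`, `Y ∼ q`. -/
def jointSum {A : Type*} [AddGroup A] (p q : A → ℝ) : A × A → ℝ :=
  push (fun z : A × A => (z.1, z.1 + z.2)) (prodDist p q)

/-- Joint distribution of `(X, π_V(X))`. -/
def selfProj {n : ℕ} (V : Submodule (ZMod 2) (Fvec n)) (p : Fvec n → ℝ) :
    Fvec n × (Fvec n ⧸ V) → ℝ := push (fun x => (x, V.mkQ x)) p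

/-- Joint distribution of independent `(X₁, X₂, Y₁, Y₂)` with `X₁, X₂ ∼ p` and `Y₁, Y₂ ∼ q`. -/
def quad {A : Type*} (p q : A → ℝ) : A × A × A × A → ℝ :=
  fun z => p z.1 * p z.2.1 * q z.2.2.1 * q z.2.2.2

/-- Distribution of `X₁ + ⋯ + X_k` for independent `Xᵢ ∼ p i`. -/
def indepSum {A : Type*} [AddCommGroup A] (k : ℕ) (p : Fin k → A → ℝ) : A → ℝ :=
  push (fun x : Fin k → A => ∑ i, x i) (fun x => ∏ i, p i (x i))

/-- Statement `A(η, L, c)` from the paper. -/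
def StA (η L c : ℝ) : Prop :=
  ∀ (n : ℕ) (p q : Fvec n → ℝ), IsDist p → IsDist q →
    ent (conv p q) ≤ (1 - η) * (ent p + ent q) →
    ∃ V : Submodule (ZMod 2) (Fvec n),
      ent (unifOn (V : Set (Fvec n))) ≤ L * (ent p + ent q) ∧
      ent (push V.mkQ p) + ent (push V.mkQ q) ≤ (1 - c) * (ent p + ent q)

/-- Statement `B(η, ε, L)` from the paper. -/
def StB (η ε L : ℝ) : Prop :=
  ∀ (n : ℕ) (p q : Fvec n → ℝ), IsDist p → IsDist q →
    ∃ V : Submodule (ZMod 2) (Fvec n),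
      ent (unifOn (V : Set (Fvec n))) ≤ L * (ent p + ent q) ∧
      ent (conv (push V.mkQ p) (push V.mkQ q)) ≥
        (1 - η) * (ent (push V.mkQ p) + ent (push V.mkQ q)) - ε * (ent p + ent q)

/-!
Fibring the sum `X + Y` of independent pairs over `G` gives
`s[X₁ + X₂; Y₁ + Y₂] + s[X₁ | X₁ + X₂; Y₁ | Y₁ + Y₂] = 2 s[X; Y] + I`, where `I` is a conditional
mutual information of two sums given the total sum. Hence hypotheses (i) and (iii), and likewise
(ii) and (iv), say that two such conditional mutual informations are at most `2κ`. By the entropic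
Balog–Szemerédi–Gowers argument the self-distances `d[X_u + Y_w; X_u + Y_w]` are then at most `6κ`
on average.

For each `(u, w)` the entropic Freiman–Ruzsa theorem over `𝔽₂` for `X_u + Y_w` yields a subspace
`V` with `H[π_V(X_u + Y_w)] ≤ 15 d[X_u + Y_w; X_u + Y_w]`, and this bounds both `H[π_V(X_u)]` and
`H[π_V(Y_w)]`. That theorem comes from minimising `τ = d[X; Y] + η (d[X⁰; X] + d[X⁰; Y])`: with
the three sums of an endgame as competitors, a minimiser satisfies `d ≤ (12η + η²) d`, so `d = 0`
for `η = 1/13` and the minimiser is uniform on a coset of a subspace.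
-/

section Distributions

variable {A B C D : Type*}

lemma IsDist.nonneg {p : A → ℝ} (hp : IsDist p) (a : A) : 0 ≤ p a := hp.1 a

lemma IsDist.sum_eq_one [Fintype A] {p : A → ℝ} (hp : IsDist p) : ∑ a, p a = 1 := by
  rw [← finsum_eq_sum_of_fintype, hp.2]

lemma isDist_iff_sum [Fintype A] {p : A → ℝ} : IsDist p ↔ (∀ a, 0 ≤ p a) ∧ ∑ a, p a = 1 := by
  rw [IsDist, finsum_eq_sum_of_fintype]

lemma IsDist.le_one [Finite A] {p : A → ℝ} (hp : IsDist p) (a : A) : p a ≤ 1 := by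
  cases nonempty_fintype A
  rw [← hp.sum_eq_one]
  exact Finset.single_le_sum (fun b _ => hp.nonneg b) (Finset.mem_univ a)

lemma IsDist.sum_mul_const [Fintype A] {p : A → ℝ} (hp : IsDist p) (t : ℝ) :
    ∑ a, p a * t = t := by
  rw [← Finset.sum_mul, hp.sum_eq_one, one_mul]

lemma IsDist.sum_mul_le_sum_mul [Fintype A] {p : A → ℝ} (hp : IsDist p) {φ ψ : A → ℝ}
    (h : ∀ a, p a ≠ 0 → φ a ≤ ψ a) : ∑ a, p a * φ a ≤ ∑ a, p a * ψ a := by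
  refine Finset.sum_le_sum fun a _ => ?_
  obtain ha | ha := eq_or_ne (p a) 0
  · simp [ha]
  · exact mul_le_mul_of_nonneg_left (h a ha) (hp.nonneg a)

lemma IsDist.le_sum_mul [Fintype A] {p : A → ℝ} (hp : IsDist p) {φ : A → ℝ} {t : ℝ}
    (h : ∀ a, p a ≠ 0 → t ≤ φ a) : t ≤ ∑ a, p a * φ a :=
  (hp.sum_mul_const t).symm.trans_le (hp.sum_mul_le_sum_mul h)

lemma eq_of_forall_sum_mul_eq [Fintype A] {p q : A → ℝ}
    (h : ∀ φ : A → ℝ, ∑ a, p a * φ a = ∑ a, q a * φ a) : p = q := by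
  classical
  ext a
  simpa [Pi.single_apply] using h (Pi.single a 1)

lemma push_apply [Fintype A] [DecidableEq B] (f : A → B) (p : A → ℝ) (b : B) :
    push f p b = ∑ a with f a = b, p a := by
  simp [push, finsum_eq_sum_of_fintype, finsum_eq_if, Finset.sum_filter]

lemma sum_push_mul [Fintype A] [Fintype B] (f : A → B) (p : A → ℝ) (φ : B → ℝ) :
    ∑ b, push f p b * φ b = ∑ a, p a * φ (f a) := by
  classical
  simp only [push_apply, Finset.sum_mul]
  rw [← Finset.sum_fiberwise (s := Finset.univ) (g := f)]
  refine Finset.sum_congr rfl fun b _ => Finset.sum_congr rfl fun a ha => ?_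
  rw [(Finset.mem_filter.1 ha).2]

lemma push_push [Finite A] [Finite B] [Finite C] (g : B → C) (f : A → B) (p : A → ℝ) :
    push g (push f p) = push (fun a => g (f a)) p := by
  cases nonempty_fintype A
  cases nonempty_fintype B
  cases nonempty_fintype C
  exact eq_of_forall_sum_mul_eq fun φ => by simp only [sum_push_mul]

lemma push_apply_of_injective [Finite A] {f : A → B} (hf : f.Injective) (p : A → ℝ) (a : A) :
    push f p (f a) = p a := by
  classical
  cases nonempty_fintype A
  simp [push_apply, hf.eq_iff, Finset.sum_filter]

lemma le_push_apply [Finite A] (f : A → B) {p : A → ℝ} (hp : ∀ a, 0 ≤ p a) (a : A) :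
    p a ≤ push f p (f a) := by
  classical
  cases nonempty_fintype A
  rw [push_apply]
  exact Finset.single_le_sum (fun b _ => hp b) (by simp)

lemma push_nonneg [Finite A] (f : A → B) {p : A → ℝ} (hp : ∀ a, 0 ≤ p a) (b : B) :
    0 ≤ push f p b := by
  classical
  cases nonempty_fintype A
  rw [push_apply]
  exact Finset.sum_nonneg fun a _ => hp a

lemma IsDist.push [Finite A] [Finite B] {p : A → ℝ} (hp : IsDist p) (f : A → B) :
    IsDist (push f p) := by
  cases nonempty_fintype A
  cases nonempty_fintype B
  refine isDist_iff_sum.2 ⟨push_nonneg f hp.nonneg, ?_⟩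
  simpa using (sum_push_mul f p 1).trans (by simpa using hp.sum_eq_one)

lemma sum_prodDist_mul [Fintype A] [Fintype B] (p : A → ℝ) (q : B → ℝ) (φ : A × B → ℝ) :
    ∑ z, prodDist p q z * φ z = ∑ a, p a * ∑ b, q b * φ (a, b) := by
  simp only [Fintype.sum_prod_type, prodDist, Finset.mul_sum, mul_assoc]

lemma finsum_finsum_mul [Fintype A] [Fintype B] (p : A → ℝ) (q : B → ℝ) (φ : A → B → ℝ) :
    ∑ᶠ a, ∑ᶠ b, p a * q b * φ a b = ∑ z, prodDist p q z * φ z.1 z.2 := by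
  simp only [finsum_eq_sum_of_fintype, Fintype.sum_prod_type, prodDist]

lemma sum_prodDist_mul_fst [Fintype A] [Fintype B] (p : A → ℝ) {q : B → ℝ} (hq : IsDist q)
    (φ : A → ℝ) : ∑ z, prodDist p q z * φ z.1 = ∑ a, p a * φ a := by
  simp only [sum_prodDist_mul, hq.sum_mul_const]

lemma sum_prodDist_mul_snd [Fintype A] [Fintype B] {p : A → ℝ} (hp : IsDist p) (q : B → ℝ)
    (φ : B → ℝ) : ∑ z, prodDist p q z * φ z.2 = ∑ b, q b * φ b := by
  simp only [sum_prodDist_mul, hp.sum_mul_const]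

lemma IsDist.prodDist [Finite A] [Finite B] {p : A → ℝ} {q : B → ℝ} (hp : IsDist p)
    (hq : IsDist q) : IsDist (prodDist p q) := by
  cases nonempty_fintype A
  cases nonempty_fintype B
  refine isDist_iff_sum.2 ⟨fun z => mul_nonneg (hp.nonneg _) (hq.nonneg _), ?_⟩
  simpa [hp.sum_eq_one, hq.sum_eq_one] using sum_prodDist_mul p q 1

lemma push_prodMap_prodDist [Finite A] [Finite B] [Finite C] [Finite D] (f : A → C) (g : B → D)
    (p : A → ℝ) (q : B → ℝ) :
    push (fun z => (f z.1, g z.2)) (prodDist p q) = prodDist (push f p) (push g q) := by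
  cases nonempty_fintype A
  cases nonempty_fintype B
  cases nonempty_fintype C
  cases nonempty_fintype D
  exact eq_of_forall_sum_mul_eq fun φ => by simp only [sum_push_mul, sum_prodDist_mul]

lemma push_fst_prodDist [Finite A] [Finite B] (p : A → ℝ) {q : B → ℝ} (hq : IsDist q) :
    push Prod.fst (prodDist p q) = p := by
  cases nonempty_fintype A
  cases nonempty_fintype B
  exact eq_of_forall_sum_mul_eq fun φ => by simp only [sum_push_mul, sum_prodDist_mul_fst _ hq]

end Distributions

section Entropy

variable {A B C : Type*}

lemma ent_eq_sum [Fintype A] (p : A → ℝ) : ent p = ∑ a, negMulLog (p a) :=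
  finsum_eq_sum_of_fintype _

lemma ent_nonneg [Finite A] {p : A → ℝ} (hp : IsDist p) : 0 ≤ ent p := by
  cases nonempty_fintype A
  rw [ent_eq_sum]
  exact Finset.sum_nonneg fun a _ => negMulLog_nonneg (hp.nonneg a) (hp.le_one a)

lemma ent_push_eq_sum [Fintype A] [Finite B] (f : A → B) (p : A → ℝ) :
    ent (push f p) = ∑ a, p a * -log (push f p (f a)) := by
  cases nonempty_fintype B
  simp only [ent_eq_sum, negMulLog, neg_mul_comm, sum_push_mul f p fun b => -log (push f p b)]

lemma ent_push_congr [Finite A] [Finite B] [Finite C] {f : A → B} {g : A → C}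
    (h : ∀ a b, f a = f b ↔ g a = g b) (p : A → ℝ) : ent (push f p) = ent (push g p) := by
  classical
  cases nonempty_fintype A
  simp only [ent_push_eq_sum, push_apply, h]

lemma ent_push_of_injective [Finite A] [Finite B] {f : A → B} (hf : f.Injective) (p : A → ℝ) :
    ent (push f p) = ent p := by
  cases nonempty_fintype A
  simp only [ent_push_eq_sum, push_apply_of_injective hf, ent_eq_sum, negMulLog, neg_mul_comm]

lemma ent_push_le [Finite A] [Finite B] (f : A → B) {p : A → ℝ} (hp : IsDist p) :
    ent (push f p) ≤ ent p := by
  cases nonempty_fintype A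
  rw [ent_push_eq_sum, ent_eq_sum]
  refine Finset.sum_le_sum fun a _ => ?_
  obtain ha | ha := (hp.nonneg a).eq_or_lt
  · simp [← ha]
  · rw [negMulLog, neg_mul_comm]
    gcongr
    exact le_push_apply f hp.nonneg a

lemma ent_prodDist [Finite A] [Finite B] {p : A → ℝ} {q : B → ℝ} (hp : IsDist p)
    (hq : IsDist q) : ent (prodDist p q) = ent p + ent q := by
  cases nonempty_fintype A
  cases nonempty_fintype B
  simp only [ent_eq_sum, Fintype.sum_prod_type, prodDist, negMulLog_mul, Finset.sum_add_distrib,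
    ← Finset.mul_sum, ← Finset.sum_mul, hp.sum_eq_one, hq.sum_eq_one, one_mul]

end Entropy

section MutualInformation

variable {Ω A B S : Type*}

lemma push_snd_apply [Fintype A] [Finite B] (r : A × B → ℝ) (b : B) :
    push Prod.snd r b = ∑ a, r (a, b) := by
  classical
  cases nonempty_fintype B
  simp [push_apply, Finset.sum_filter, Fintype.sum_prod_type]

lemma ent_le_sum_mul_neg_log [Fintype A] {p q : A → ℝ} (hp : ∀ a, 0 ≤ p a) (hq : ∀ a, 0 ≤ q a)
    (hqp : ∀ a, q a = 0 → p a = 0) (hsum : ∑ a, q a ≤ ∑ a, p a) :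
    ent p ≤ ∑ a, p a * -log (q a) := by
  have pointwise (a : A) : negMulLog (p a) ≤ p a * -log (q a) + (q a - p a) := by
    obtain hpa | hpa := (hp a).eq_or_lt
    · simpa [← hpa] using hq a
    have hqa : 0 < q a := (hq a).lt_of_ne' fun h => hpa.ne' (hqp a h)
    have key : p a * log (q a / p a) ≤ p a * (q a / p a - 1) :=
      mul_le_mul_of_nonneg_left (log_le_sub_one_of_pos (div_pos hqa hpa)) hpa.le
    rw [log_div hqa.ne' hpa.ne', mul_sub_one, mul_div_cancel₀ _ hpa.ne'] at key
    rw [negMulLog]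
    linarith
  calc ent p ≤ ∑ a, (p a * -log (q a) + (q a - p a)) := by
        rw [ent_eq_sum]
        exact Finset.sum_le_sum fun a _ => pointwise a
    _ ≤ ∑ a, p a * -log (q a) := by
        rw [Finset.sum_add_distrib, Finset.sum_sub_distrib]
        linarith

/-- The law of `(A, B, S)` with `(A, S) ∼ F`, `(B, S) ∼ K` and `A`, `B` conditionally independent
given `S`, for `F` and `K` with a common marginal on `S`. -/
def condProd (F : A × S → ℝ) (K : B × S → ℝ) : A × B × S → ℝ :=
  fun z => F (z.1, z.2.2) * K z.2 / push Prod.snd F z.2.2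

lemma condProd_nonneg [Finite A] [Finite S] {F : A × S → ℝ} {K : B × S → ℝ}
    (hF : ∀ z, 0 ≤ F z) (hK : ∀ z, 0 ≤ K z) (z : A × B × S) : 0 ≤ condProd F K z :=
  div_nonneg (mul_nonneg (hF _) (hK _)) (push_nonneg _ hF _)

lemma push_fst_condProd [Finite A] [Finite B] [Finite S] {F : A × S → ℝ} {K : B × S → ℝ}
    (hF : ∀ z, 0 ≤ F z) (hFK : push Prod.snd F = push Prod.snd K) :
    push (fun z => (z.1, z.2.2)) (condProd F K) = F := by
  classical
  cases nonempty_fintype A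
  cases nonempty_fintype B
  cases nonempty_fintype S
  ext ⟨a, s⟩
  have marginal : push (fun z => (z.1, z.2.2)) (condProd F K) (a, s) =
      ∑ b, condProd F K (a, b, s) := by
    simp [push_apply, Finset.sum_filter, Fintype.sum_prod_type, ite_and]
  rw [marginal]
  simp only [condProd]
  rw [← Finset.sum_div, ← Finset.mul_sum, ← push_snd_apply, ← hFK]
  refine mul_div_cancel_of_imp fun h => ?_
  exact (hF _).antisymm' (h ▸ le_push_apply Prod.snd hF (a, s))

lemma push_snd_condProd [Finite A] [Finite B] [Finite S] {F : A × S → ℝ} {K : B × S → ℝ}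
    (hK : ∀ z, 0 ≤ K z) (hFK : push Prod.snd F = push Prod.snd K) :
    push Prod.snd (condProd F K) = K := by
  cases nonempty_fintype A
  ext ⟨b, s⟩
  rw [push_snd_apply]
  simp only [condProd]
  rw [← Finset.sum_div, ← Finset.sum_mul, ← push_snd_apply, mul_comm, hFK]
  refine mul_div_cancel_of_imp fun h => ?_
  exact (hK _).antisymm' (h ▸ le_push_apply Prod.snd hK (b, s))

lemma isDist_condProd [Finite A] [Finite B] [Finite S] {F : A × S → ℝ} {K : B × S → ℝ}
    (hF : IsDist F) (hK : IsDist K) (hFK : push Prod.snd F = push Prod.snd K) :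
    IsDist (condProd F K) := by
  cases nonempty_fintype A
  cases nonempty_fintype B
  cases nonempty_fintype S
  refine isDist_iff_sum.2 ⟨condProd_nonneg hF.nonneg hK.nonneg, ?_⟩
  rw [Fintype.sum_prod_type_right]
  simp only [← push_snd_apply, push_snd_condProd hK.nonneg hFK, hK.sum_eq_one]

lemma condProd_ne_zero [Finite A] [Finite B] [Finite S] {r : A × B × S → ℝ} (hr : ∀ z, 0 ≤ r z)
    {z : A × B × S} (hz : r z ≠ 0) :
    condProd (push (fun z => (z.1, z.2.2)) r) (push Prod.snd r) z ≠ 0 := by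
  have pos := (hr z).lt_of_ne' hz
  refine div_ne_zero (mul_ne_zero ?_ ?_) ?_
  · exact (pos.trans_le (le_push_apply (fun z => (z.1, z.2.2)) hr z)).ne'
  · exact (pos.trans_le (le_push_apply Prod.snd hr z)).ne'
  · rw [push_push]
    exact (pos.trans_le (le_push_apply (fun z => z.2.2) hr z)).ne'

lemma sum_mul_neg_log_condProd [Fintype A] [Fintype B] [Fintype S] {r : A × B × S → ℝ}
    (hr : ∀ z, 0 ≤ r z) :
    ∑ z, r z * -log (condProd (push (fun z => (z.1, z.2.2)) r) (push Prod.snd r) z) =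
      ent (push (fun z => (z.1, z.2.2)) r) + ent (push Prod.snd r)
        - ent (push (fun z => z.2.2) r) := by
  have pointwise (z : A × B × S) :
      r z * -log (condProd (push (fun z => (z.1, z.2.2)) r) (push Prod.snd r) z) =
        r z * -log (push (fun z => (z.1, z.2.2)) r (z.1, z.2.2)) + r z * -log (push Prod.snd r z.2)
          - r z * -log (push (fun z => z.2.2) r z.2.2) := by
    obtain hz | hz := eq_or_ne (r z) 0
    · simp [hz]
    have h := condProd_ne_zero hr hz
    rw [condProd, push_push, div_ne_zero_iff, mul_ne_zero_iff] at h
    rw [condProd, push_push, log_div (mul_ne_zero h.1.1 h.1.2) h.2, log_mul h.1.1 h.1.2]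
    ring
  simp only [pointwise, ent_push_eq_sum, Finset.sum_add_distrib, Finset.sum_sub_distrib]

lemma ent_condProd [Finite A] [Finite B] [Finite S] {F : A × S → ℝ} {K : B × S → ℝ}
    (hF : ∀ z, 0 ≤ F z) (hK : ∀ z, 0 ≤ K z) (hFK : push Prod.snd F = push Prod.snd K) :
    ent (condProd F K) = ent F + ent K - ent (push Prod.snd F) := by
  cases nonempty_fintype A
  cases nonempty_fintype B
  cases nonempty_fintype S
  have h := sum_mul_neg_log_condProd (condProd_nonneg hF hK)
  rw [← push_push Prod.snd Prod.snd, push_fst_condProd hF hFK, push_snd_condProd hK hFK,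
    ← hFK] at h
  simpa only [ent_eq_sum (condProd F K), negMulLog, neg_mul_comm] using h

/- Gibbs' inequality against the law `condProd` with the same marginals. -/
lemma condMI_nonneg [Finite A] [Finite B] [Finite S] {r : A × B × S → ℝ} (hr : IsDist r) :
    0 ≤ condMI r := by
  cases nonempty_fintype A
  cases nonempty_fintype B
  cases nonempty_fintype S
  have hq := isDist_condProd (hr.push fun z => (z.1, z.2.2)) (hr.push Prod.snd)
    (by simp only [push_push])
  have gibbs := ent_le_sum_mul_neg_log hr.nonneg hq.nonneg
    (fun z hz => not_imp_not.1 (condProd_ne_zero hr.nonneg) hz)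
    (hq.sum_eq_one.trans hr.sum_eq_one.symm).le
  rw [sum_mul_neg_log_condProd hr.nonneg] at gibbs
  rw [condMI]
  linarith

lemma condMI_push [Finite Ω] [Finite A] [Finite B] [Finite S] (f : Ω → A) (g : Ω → B) (h : Ω → S)
    (P : Ω → ℝ) :
    condMI (push (fun ω => (f ω, g ω, h ω)) P) =
      ent (push (fun ω => (f ω, h ω)) P) + ent (push (fun ω => (g ω, h ω)) P)
        - ent (push (fun ω => (f ω, g ω, h ω)) P) - ent (push h P) := by
  simp only [condMI, push_push]

lemma ent_push_submodular [Finite Ω] [Finite A] [Finite B] [Finite S] {P : Ω → ℝ} (hP : IsDist P)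
    (f : Ω → A) (g : Ω → B) (h : Ω → S) :
    ent (push (fun ω => (f ω, g ω, h ω)) P) + ent (push h P) ≤
      ent (push (fun ω => (f ω, h ω)) P) + ent (push (fun ω => (g ω, h ω)) P) := by
  have := condMI_nonneg (hP.push fun ω => (f ω, g ω, h ω))
  rw [condMI_push] at this
  linarith

end MutualInformation

section Conditioning

variable {A B Θ : Type*}

lemma fiber_nonneg [Finite A] [Finite B] {r : A × B → ℝ} (hr : ∀ z, 0 ≤ r z) (b : B) (a : A) :
    0 ≤ fiber r b a :=
  div_nonneg (hr _) (push_nonneg _ hr _)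

lemma push_snd_mul_fiber [Finite A] [Finite B] {r : A × B → ℝ} (hr : ∀ z, 0 ≤ r z) (b : B)
    (a : A) : push Prod.snd r b * fiber r b a = r (a, b) := by
  refine mul_div_cancel_of_imp' fun h => ?_
  exact (hr _).antisymm' (h ▸ le_push_apply Prod.snd hr (a, b))

lemma isDist_fiber [Finite A] [Finite B] {r : A × B → ℝ} (hr : ∀ z, 0 ≤ r z) {b : B}
    (hb : push Prod.snd r b ≠ 0) : IsDist (fiber r b) := by
  cases nonempty_fintype A
  refine isDist_iff_sum.2 ⟨fiber_nonneg hr b, ?_⟩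
  simp only [fiber]
  rw [← Finset.sum_div, ← push_snd_apply, div_self hb]

lemma push_fst_apply_eq_sum_fiber [Finite A] [Fintype B] {r : A × B → ℝ} (hr : ∀ z, 0 ≤ r z)
    (a : A) : push Prod.fst r a = ∑ b, push Prod.snd r b * fiber r b a := by
  classical
  cases nonempty_fintype A
  simp only [push_snd_mul_fiber hr]
  simp [push_apply, Finset.sum_filter, Fintype.sum_prod_type_right]

lemma condEnt_eq_sum [Fintype B] (r : A × B → ℝ) :
    condEnt r = ∑ b, push Prod.snd r b * ent (fiber r b) :=
  finsum_eq_sum_of_fintype _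

lemma ent_eq_ent_add_sum_mul_ent [Finite A] [Fintype B] {r : A × B → ℝ} {w : B → ℝ}
    {k : B → A → ℝ} (hk : ∀ b, w b ≠ 0 → IsDist (k b)) (hr : ∀ a b, r (a, b) = w b * k b a) :
    ent r = ent w + ∑ b, w b * ent (k b) := by
  cases nonempty_fintype A
  have chain (b : B) : ∑ a, negMulLog (r (a, b)) = negMulLog (w b) + w b * ent (k b) := by
    simp only [hr, negMulLog_mul, Finset.sum_add_distrib, ← Finset.mul_sum, ← Finset.sum_mul,
      ent_eq_sum]
    obtain hb | hb := eq_or_ne (w b) 0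
    · simp [hb]
    · rw [(hk b hb).sum_eq_one, one_mul]
  rw [ent_eq_sum r, Fintype.sum_prod_type_right]
  simp only [chain, Finset.sum_add_distrib, ← ent_eq_sum]

lemma condEnt_eq_ent_sub [Finite A] [Finite B] {r : A × B → ℝ} (hr : ∀ z, 0 ≤ r z) :
    condEnt r = ent r - ent (push Prod.snd r) := by
  cases nonempty_fintype B
  rw [condEnt_eq_sum, ent_eq_ent_add_sum_mul_ent (fun b => isDist_fiber hr)
    fun a b => (push_snd_mul_fiber hr b a).symm, add_sub_cancel_left]

lemma sum_mul_ent_le_ent_sum [Finite A] [Fintype Θ] {w : Θ → ℝ} (hw : IsDist w)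
    {k : Θ → A → ℝ} (hk : ∀ θ a, 0 ≤ k θ a) :
    ∑ θ, w θ * ent (k θ) ≤ ent fun a => ∑ θ, w θ * k θ a := by
  cases nonempty_fintype A
  simp only [ent_eq_sum, Finset.mul_sum]
  rw [Finset.sum_comm]
  exact Finset.sum_le_sum fun a _ => concaveOn_negMulLog.le_map_sum
    (fun θ _ => hw.nonneg θ) hw.sum_eq_one fun θ _ => hk θ a

end Conditioning

section Convolution

variable {G : Type*} [AddCommGroup G]

lemma conv_eq_sum [Fintype G] (p q : G → ℝ) (z : G) : conv p q z = ∑ x, p x * q (z - x) :=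
  finsum_eq_sum_of_fintype _

lemma sum_conv_mul [Fintype G] (p q φ : G → ℝ) :
    ∑ z, conv p q z * φ z = ∑ x, p x * ∑ y, q y * φ (x + y) := by
  simp only [conv_eq_sum, Finset.sum_mul, Finset.mul_sum]
  rw [Finset.sum_comm]
  refine Finset.sum_congr rfl fun x _ => ?_
  rw [← Equiv.sum_comp (Equiv.addLeft x)]
  simp [mul_assoc]

variable [Finite G]

lemma conv_eq_push (p q : G → ℝ) : conv p q = push (fun z => z.1 + z.2) (prodDist p q) := by
  cases nonempty_fintype G
  exact eq_of_forall_sum_mul_eq fun φ => by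
    simp only [sum_push_mul, sum_prodDist_mul, sum_conv_mul]

lemma IsDist.conv {p q : G → ℝ} (hp : IsDist p) (hq : IsDist q) : IsDist (conv p q) := by
  rw [conv_eq_push]
  exact (hp.prodDist hq).push _

lemma conv_comm (p q : G → ℝ) : conv p q = conv q p := by
  cases nonempty_fintype G
  ext z
  rw [conv_eq_sum, conv_eq_sum, ← Equiv.sum_comp (Equiv.subLeft z)]
  simp [mul_comm]

lemma conv_assoc (p q r : G → ℝ) : conv (conv p q) r = conv p (conv q r) := by
  cases nonempty_fintype G
  exact eq_of_forall_sum_mul_eq fun φ => by simp only [sum_conv_mul, add_assoc]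

lemma ent_comp_sub_right (q : G → ℝ) (x : G) : ent (fun z => q (z - x)) = ent q := by
  cases nonempty_fintype G
  rw [ent_eq_sum, ent_eq_sum]
  exact Equiv.sum_comp (Equiv.subRight x) fun z => negMulLog (q z)

lemma ent_le_ent_conv_left {p q : G → ℝ} (hp : IsDist p) (hq : IsDist q) :
    ent q ≤ ent (conv p q) := by
  cases nonempty_fintype G
  calc ent q = ∑ x, p x * ent fun z => q (z - x) := by
        simp only [ent_comp_sub_right, hp.sum_mul_const]
    _ ≤ ent (fun z => ∑ x, p x * q (z - x)) :=
        sum_mul_ent_le_ent_sum hp fun x z => hq.nonneg (z - x)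
    _ = ent (conv p q) := by simp only [← conv_eq_sum]

lemma ent_conv_le_add {p q : G → ℝ} (hp : IsDist p) (hq : IsDist q) :
    ent (conv p q) ≤ ent p + ent q := by
  rw [← ent_prodDist hp hq, conv_eq_push]
  exact ent_push_le _ (hp.prodDist hq)

/- Submodularity for `X` and `Z` given `X + Y + Z`. -/
lemma ent_conv_conv_add_ent_le {p q r : G → ℝ} (hp : IsDist p) (hq : IsDist q)
    (hr : IsDist r) :
    ent (conv (conv p q) r) + ent q ≤ ent (conv p q) + ent (conv q r) := by
  cases nonempty_fintype G
  have total : conv (conv p q) r =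
      push (fun z => z.1.1 + z.1.2 + z.2) (prodDist (prodDist p q) r) :=
    eq_of_forall_sum_mul_eq fun φ => by simp only [sum_push_mul, sum_prodDist_mul, sum_conv_mul]
  have left : ent (push (fun z => (z.1.1, z.1.1 + z.1.2 + z.2)) (prodDist (prodDist p q) r)) =
      ent p + ent (conv q r) := by
    rw [← ent_prodDist hp (hq.conv hr), ent_push_congr (g := fun z => (z.1.1, z.1.2 + z.2))]
    · congr 1
      exact eq_of_forall_sum_mul_eq fun φ => by
        simp only [sum_push_mul, sum_prodDist_mul, sum_conv_mul]
    · grind [Prod.mk.injEq]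
  have right : ent (push (fun z => (z.2, z.1.1 + z.1.2 + z.2)) (prodDist (prodDist p q) r)) =
      ent (conv p q) + ent r := by
    rw [← ent_prodDist (hp.conv hq) hr, ent_push_congr (g := fun z => (z.1.1 + z.1.2, z.2))]
    · congr 1
      exact eq_of_forall_sum_mul_eq fun φ => by
        simp only [sum_push_mul, sum_prodDist_mul, sum_conv_mul]
    · grind [Prod.mk.injEq]
  have all : ent (push (fun z => (z.1.1, z.2, z.1.1 + z.1.2 + z.2)) (prodDist (prodDist p q) r)) =
      ent p + ent q + ent r := by
    rw [← ent_prodDist hp hq, ← ent_prodDist (hp.prodDist hq) hr]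
    exact ent_push_of_injective (fun x y => by grind) _
  have submodular := ent_push_submodular ((hp.prodDist hq).prodDist hr)
    (fun z => z.1.1) (fun z => z.2) (fun z => z.1.1 + z.1.2 + z.2)
  rw [all, left, right, ← total] at submodular
  linarith

lemma IsDist.jointSum {p q : G → ℝ} (hp : IsDist p) (hq : IsDist q) : IsDist (jointSum p q) :=
  (hp.prodDist hq).push _

lemma push_fst_jointSum (p : G → ℝ) {q : G → ℝ} (hq : IsDist q) :
    push Prod.fst (jointSum p q) = p := by
  rw [jointSum, push_push]
  exact push_fst_prodDist p hq

lemma push_snd_jointSum (p q : G → ℝ) : push Prod.snd (jointSum p q) = conv p q := by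
  rw [jointSum, push_push, conv_eq_push]

lemma ent_jointSum {p q : G → ℝ} (hp : IsDist p) (hq : IsDist q) :
    ent (jointSum p q) = ent p + ent q := by
  rw [← ent_prodDist hp hq]
  exact ent_push_of_injective (fun x y => by grind) _

lemma condEnt_jointSum {p q : G → ℝ} (hp : IsDist p) (hq : IsDist q) :
    condEnt (jointSum p q) = ent p + ent q - ent (conv p q) := by
  rw [condEnt_eq_ent_sub (hp.jointSum hq).nonneg, ent_jointSum hp hq, push_snd_jointSum]

lemma dRuzsa_comm (p q : G → ℝ) : dRuzsa p q = dRuzsa q p := by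
  rw [dRuzsa, dRuzsa, conv_comm]
  ring

lemma ent_le_ent_conv_right {p q : G → ℝ} (hp : IsDist p) (hq : IsDist q) :
    ent p ≤ ent (conv p q) :=
  conv_comm q p ▸ ent_le_ent_conv_left hq hp

lemma dRuzsa_nonneg {p q : G → ℝ} (hp : IsDist p) (hq : IsDist q) : 0 ≤ dRuzsa p q := by
  have left := ent_le_ent_conv_left hp hq
  have right := ent_le_ent_conv_right hp hq
  rw [dRuzsa]
  linarith

lemma dRuzsa_self_le {p q : G → ℝ} (hp : IsDist p) (hq : IsDist q) :
    dRuzsa p p ≤ 2 * dRuzsa p q := by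
  have triple := ent_conv_conv_add_ent_le hp hq hp
  have mono := ent_le_ent_conv_left hq (hp.conv hp)
  rw [← conv_assoc, conv_comm q p] at mono
  rw [conv_comm q p] at triple
  rw [dRuzsa, dRuzsa]
  linarith

end Convolution

section ConditionalCopies

variable {A B C D S Θ : Type*} [Finite A] [Finite B] [Finite C] [Finite D] [Finite S] [Finite Θ]

lemma push_comp_fst_condProd {F : A × Θ → ℝ} {K : B × Θ → ℝ} (hF : ∀ z, 0 ≤ F z)
    (hFK : push Prod.snd F = push Prod.snd K) (f : A × Θ → C) :
    push (fun z => f (z.1, z.2.2)) (condProd F K) = push f F := by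
  rw [← push_push f (fun z : A × B × Θ => (z.1, z.2.2)), push_fst_condProd hF hFK]

lemma push_comp_snd_condProd {F : A × Θ → ℝ} {K : B × Θ → ℝ} (hK : ∀ z, 0 ≤ K z)
    (hFK : push Prod.snd F = push Prod.snd K) (g : B × Θ → C) :
    push (fun z => g z.2) (condProd F K) = push g K := by
  rw [← push_push g (Prod.snd : A × B × Θ → B × Θ), push_snd_condProd hK hFK]

lemma ent_push_condProd_le {F : A × Θ → ℝ} {K : B × Θ → ℝ} (hF : IsDist F) (hK : IsDist K)
    (hFK : push Prod.snd F = push Prod.snd K) (f : A × Θ → C) (g : B × Θ → D) (h : Θ → S) :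
    ent (push (fun z => (f (z.1, z.2.2), g z.2, h z.2.2)) (condProd F K))
        + ent (push (fun z => h z.2) F) ≤
      ent (push (fun z => (f z, h z.2)) F) + ent (push (fun z => (g z, h z.2)) K) := by
  have submodular := ent_push_submodular (isDist_condProd hF hK hFK)
    (fun z => f (z.1, z.2.2)) (fun z => g z.2) (fun z => h z.2.2)
  rwa [push_comp_fst_condProd hF.nonneg hFK fun z => h z.2,
    push_comp_fst_condProd hF.nonneg hFK fun z => (f z, h z.2),
    push_comp_snd_condProd hK.nonneg hFK fun z => (g z, h z.2)] at submodular

variable {G : Type*} [AddCommGroup G] [Finite G]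

lemma push_add_condProd_self_apply {r : G × Θ → ℝ} (hr : ∀ z, 0 ≤ r z) (a : G) (θ : Θ) :
    push (fun z => (z.1 + z.2.1, z.2.2)) (condProd r r) (a, θ) =
      push Prod.snd r θ * conv (fiber r θ) (fiber r θ) a := by
  classical
  cases nonempty_fintype G
  cases nonempty_fintype Θ
  have marginal : push (fun z => (z.1 + z.2.1, z.2.2)) (condProd r r) (a, θ) =
      ∑ x, condProd r r (x, a - x, θ) := by
    simp [push_apply, Finset.sum_filter, Fintype.sum_prod_type, ite_and, ← eq_sub_iff_add_eq']
  simp only [marginal, conv_eq_sum, Finset.mul_sum, ← mul_assoc, push_snd_mul_fiber hr]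
  simp only [condProd, fiber, mul_div_assoc]

lemma ent_push_add_condProd_self_le {r : G × Θ → ℝ} (hr : IsDist r) (c : Θ → G) (σ : Θ → S) :
    ent (push (fun z => (z.1 + z.2.1, z.2.2)) (condProd r r)) + ent (push (fun z => σ z.2) r) ≤
      ent (push (fun z => (z.1 + z.2.1 - c z.2.2, σ z.2.2)) (condProd r r))
        + ent (push Prod.snd r) := by
  have submodular := ent_push_submodular (isDist_condProd hr hr rfl)
    (fun z => z.1 + z.2.1 - c z.2.2) (fun z => z.2.2) (fun z => σ z.2.2)
  have joint : ent (push (fun z => (z.1 + z.2.1 - c z.2.2, z.2.2, σ z.2.2)) (condProd r r)) =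
      ent (push (fun z => (z.1 + z.2.1, z.2.2)) (condProd r r)) :=
    ent_push_congr (by grind [Prod.mk.injEq]) _
  have index : ent (push (fun z => (z.2.2, σ z.2.2)) (condProd r r)) = ent (push Prod.snd r) := by
    rw [push_comp_snd_condProd hr.nonneg rfl fun z => (z.2, σ z.2)]
    exact ent_push_congr (by grind [Prod.mk.injEq]) _
  rwa [joint, index, push_comp_snd_condProd hr.nonneg rfl fun z => σ z.2] at submodular

/- With `Bᵢ = c θ - Aᵢ` for conditionally independent `A₁`, `A₂`, we have
`A₁ + A₂ - c θ = A₁ - B₂ = A₂ - B₁`. -/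
lemma ent_push_add_sub_condProd_self_le {r : G × Θ → ℝ} (hr : IsDist r) {c : Θ → G} {σ : Θ → S}
    (hcσ : (fun θ => (c θ, σ θ)).Injective) :
    ent (push (fun z => (z.1 + z.2.1 - c z.2.2, σ z.2.2)) (condProd r r)) +
        2 * ent r + 2 * ent (push (fun z => σ z.2) r) ≤
      2 * ent (push (fun z => (z.1, σ z.2)) r) + 2 * ent (push (fun z => (c z.2 - z.1, σ z.2)) r)
        + ent (push Prod.snd r) := by
  have inj {θ θ' : Θ} : θ = θ' ↔ c θ = c θ' ∧ σ θ = σ θ' := by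
    simpa [Prod.ext_iff] using (hcσ.eq_iff (a := θ) (b := θ')).symm
  have submodular := ent_push_submodular (isDist_condProd hr hr rfl)
    (fun z => z.1) (fun z => c z.2.2 - z.1) (fun z => (z.1 + z.2.1 - c z.2.2, σ z.2.2))
  have joint : ent (push (fun z => (z.1, c z.2.2 - z.1, z.1 + z.2.1 - c z.2.2, σ z.2.2))
      (condProd r r)) = 2 * ent r - ent (push Prod.snd r) := by
    rw [ent_push_of_injective (by rintro ⟨a, b, θ⟩ ⟨a', b', θ'⟩; grind),
      ent_condProd hr.nonneg hr.nonneg rfl, two_mul]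
  have left : ent (push (fun z => (z.1, z.1 + z.2.1 - c z.2.2, σ z.2.2)) (condProd r r)) =
      ent (push (fun z => (z.1, c z.2.2 - z.2.1, σ z.2.2)) (condProd r r)) :=
    ent_push_congr (by grind [Prod.mk.injEq]) _
  have right :
      ent (push (fun z => (c z.2.2 - z.1, z.1 + z.2.1 - c z.2.2, σ z.2.2)) (condProd r r)) =
        ent (push (fun z => (c z.2.2 - z.1, z.2.1, σ z.2.2)) (condProd r r)) :=
    ent_push_congr (by grind [Prod.mk.injEq]) _
  have cross₁ := ent_push_condProd_le hr hr rfl (fun z => z.1) (fun z => c z.2 - z.1) σ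
  have cross₂ := ent_push_condProd_le hr hr rfl (fun z => c z.2 - z.1) (fun z => z.1) σ
  rw [joint, left, right] at submodular
  linarith

end ConditionalCopies

section FiberRuzsaDistance

variable {G S Θ : Type*} [AddCommGroup G] [Finite G] [Finite S] [Fintype Θ]

lemma sum_mul_dRuzsa_fiber_self {r : G × Θ → ℝ} (hr : ∀ z, 0 ≤ r z) :
    ∑ θ, push Prod.snd r θ * dRuzsa (fiber r θ) (fiber r θ) =
      ent (push (fun z => (z.1 + z.2.1, z.2.2)) (condProd r r)) - ent r := by
  have sums : ent (push (fun z => (z.1 + z.2.1, z.2.2)) (condProd r r)) =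
      ent (push Prod.snd r) + ∑ θ, push Prod.snd r θ * ent (conv (fiber r θ) (fiber r θ)) :=
    ent_eq_ent_add_sum_mul_ent (fun θ hθ => (isDist_fiber hr hθ).conv (isDist_fiber hr hθ))
      (push_add_condProd_self_apply hr)
  have single : ∑ θ, push Prod.snd r θ * ent (fiber r θ) = ent r - ent (push Prod.snd r) := by
    rw [← condEnt_eq_sum, condEnt_eq_ent_sub hr]
  simp only [dRuzsa, sub_sub, add_halves, mul_sub, Finset.sum_sub_distrib, single, sums]
  ring

lemma sum_mul_dRuzsa_fiber_self_le {r : G × Θ → ℝ} (hr : IsDist r) {c : Θ → G}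
    {σ : Θ → S} (hcσ : (fun θ => (c θ, σ θ)).Injective) :
    ∑ θ, push Prod.snd r θ * dRuzsa (fiber r θ) (fiber r θ) ≤
      3 * condMI (push (fun z => (z.1, c z.2 - z.1, σ z.2)) r) + 2 * ent (push Prod.snd r)
        - ent (push (fun z => (z.1, σ z.2)) r) - ent (push (fun z => (c z.2 - z.1, σ z.2)) r) := by
  have inj {θ θ' : Θ} : θ = θ' ↔ c θ = c θ' ∧ σ θ = σ θ' := by
    simpa [Prod.ext_iff] using (hcσ.eq_iff (a := θ) (b := θ')).symm
  have triple : ent (push (fun z => (z.1, c z.2 - z.1, σ z.2)) r) = ent r :=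
    ent_push_of_injective (by rintro ⟨a, θ⟩ ⟨a', θ'⟩; grind) _
  have sum_le := ent_push_add_condProd_self_le hr c σ
  have difference_le := ent_push_add_sub_condProd_self_le hr hcσ
  rw [sum_mul_dRuzsa_fiber_self hr.nonneg, condMI_push, triple]
  linarith

end FiberRuzsaDistance

section Fibring

variable {G U W : Type*} [AddCommGroup G]

/-- The law of `(X + Y, (U, W))` for independent pairs `(X, U) ∼ r₁` and `(Y, W) ∼ r₂`. -/
def sumJoint (r₁ : G × U → ℝ) (r₂ : G × W → ℝ) : G × (U × W) → ℝ :=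
  push (fun z => (z.1.1 + z.2.1, (z.1.2, z.2.2))) (prodDist r₁ r₂)

variable [Finite G] [Finite U] [Finite W]

lemma IsDist.sumJoint {r₁ : G × U → ℝ} {r₂ : G × W → ℝ} (h₁ : IsDist r₁) (h₂ : IsDist r₂) :
    IsDist (sumJoint r₁ r₂) :=
  (h₁.prodDist h₂).push _

lemma push_fst_sumJoint (r₁ : G × U → ℝ) (r₂ : G × W → ℝ) :
    push Prod.fst (sumJoint r₁ r₂) = conv (push Prod.fst r₁) (push Prod.fst r₂) := by
  rw [sumJoint, push_push, conv_eq_push, ← push_prodMap_prodDist, push_push]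

lemma push_snd_sumJoint (r₁ : G × U → ℝ) (r₂ : G × W → ℝ) :
    push Prod.snd (sumJoint r₁ r₂) = prodDist (push Prod.snd r₁) (push Prod.snd r₂) := by
  rw [sumJoint, push_push, ← push_prodMap_prodDist]

lemma sumJoint_apply (r₁ : G × U → ℝ) (r₂ : G × W → ℝ) (z : G) (u : U) (w : W) :
    sumJoint r₁ r₂ (z, (u, w)) = conv (fun x => r₁ (x, u)) (fun y => r₂ (y, w)) z := by
  classical
  cases nonempty_fintype G
  cases nonempty_fintype U
  cases nonempty_fintype W
  simp [sumJoint, prodDist, conv_eq_sum, push_apply, Finset.sum_filter, Fintype.sum_prod_type,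
    ite_and, ← eq_sub_iff_add_eq']

lemma fiber_sumJoint (r₁ : G × U → ℝ) (r₂ : G × W → ℝ) (u : U) (w : W) :
    fiber (sumJoint r₁ r₂) (u, w) = conv (fiber r₁ u) (fiber r₂ w) := by
  cases nonempty_fintype G
  ext z
  simp only [fiber, push_snd_sumJoint, sumJoint_apply, prodDist, conv_eq_sum, Finset.sum_div,
    mul_div_mul_comm]

lemma condEnt_sumJoint [Fintype U] [Fintype W] (r₁ : G × U → ℝ) (r₂ : G × W → ℝ) :
    condEnt (sumJoint r₁ r₂) = ∑ θ, prodDist (push Prod.snd r₁) (push Prod.snd r₂) θ *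
      ent (conv (fiber r₁ θ.1) (fiber r₂ θ.2)) := by
  simp only [condEnt_eq_sum, push_snd_sumJoint, ← fiber_sumJoint]

lemma sum_mul_dRuzsa_fiber_eq [Fintype U] [Fintype W] {r₁ : G × U → ℝ} {r₂ : G × W → ℝ}
    (h₁ : IsDist r₁) (h₂ : IsDist r₂) :
    ∑ θ, prodDist (push Prod.snd r₁) (push Prod.snd r₂) θ *
        dRuzsa (fiber r₁ θ.1) (fiber r₂ θ.2) =
      condEnt (sumJoint r₁ r₂) - condEnt r₁ / 2 - condEnt r₂ / 2 := by
  rw [condEnt_sumJoint, condEnt_eq_sum r₁, condEnt_eq_sum r₂,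
    ← sum_prodDist_mul_fst (push Prod.snd r₁) (h₂.push Prod.snd) fun u => ent (fiber r₁ u),
    ← sum_prodDist_mul_snd (h₁.push Prod.snd) (push Prod.snd r₂) fun w => ent (fiber r₂ w)]
  simp only [dRuzsa, mul_sub, mul_div_assoc', Finset.sum_sub_distrib, ← Finset.sum_div]

lemma sCond_eq {r₁ : G × U → ℝ} {r₂ : G × W → ℝ} (h₁ : IsDist r₁) (h₂ : IsDist r₂) :
    sCond r₁ r₂ = condEnt r₁ + condEnt r₂ - condEnt (sumJoint r₁ r₂) := by
  cases nonempty_fintype U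
  cases nonempty_fintype W
  rw [sCond, finsum_finsum_mul, condEnt_sumJoint, condEnt_eq_sum r₁, condEnt_eq_sum r₂,
    ← sum_prodDist_mul_fst (push Prod.snd r₁) (h₂.push Prod.snd) fun u => ent (fiber r₁ u),
    ← sum_prodDist_mul_snd (h₁.push Prod.snd) (push Prod.snd r₂) fun w => ent (fiber r₂ w)]
  simp only [sDouble, mul_sub, mul_add, Finset.sum_sub_distrib, Finset.sum_add_distrib]

end Fibring

section FourVariables

variable {G : Type*}

/-- The law of independent `((X₁, X₂), (Y₁, Y₂))` with `Xᵢ ∼ pᵢ` and `Yᵢ ∼ qᵢ`. -/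
def prodFour (p₁ p₂ q₁ q₂ : G → ℝ) : (G × G) × (G × G) → ℝ :=
  prodDist (prodDist p₁ p₂) (prodDist q₁ q₂)

variable [Finite G]

lemma push_swap_inner_prodFour (p₁ p₂ q₁ q₂ : G → ℝ) :
    push (fun z => ((z.1.1, z.2.1), (z.1.2, z.2.2))) (prodFour p₁ p₂ q₁ q₂) =
      prodFour p₁ q₁ p₂ q₂ := by
  ext ⟨⟨x₁, y₁⟩, ⟨x₂, y₂⟩⟩
  refine (push_apply_of_injective (fun z z' => by grind) _ ((x₁, x₂), (y₁, y₂))).trans ?_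
  exact mul_mul_mul_comm _ _ _ _

lemma push_swap_outer_prodFour (p₁ p₂ q₁ q₂ : G → ℝ) :
    push (fun z => ((z.1.1, z.2.2), (z.2.1, z.1.2))) (prodFour p₁ p₂ q₁ q₂) =
      prodFour p₁ q₂ q₁ p₂ := by
  ext ⟨⟨x₁, y₂⟩, ⟨y₁, x₂⟩⟩
  refine (push_apply_of_injective (fun z z' => by grind) _ ((x₁, x₂), (y₁, y₂))).trans ?_
  simp only [prodFour, prodDist]
  ring

variable [AddCommGroup G]

/-- The conditional mutual information `I[X₁ + Y₁ : X₁ + Y₂ | X₁ + X₂ + Y₁ + Y₂]` of independent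
`Xᵢ ∼ pᵢ` and `Yᵢ ∼ qᵢ`. -/
def pairInfo (p₁ p₂ q₁ q₂ : G → ℝ) : ℝ :=
  condMI (push (fun z => (z.1.1 + z.2.1, z.1.1 + z.2.2, z.1.1 + z.1.2 + (z.2.1 + z.2.2)))
    (prodFour p₁ p₂ q₁ q₂))

lemma push_sums_prodFour (p₁ p₂ q₁ q₂ : G → ℝ) :
    push (fun z => (z.1.1 + z.1.2, z.2.1 + z.2.2)) (prodFour p₁ p₂ q₁ q₂) =
      prodDist (conv p₁ p₂) (conv q₁ q₂) := by
  rw [conv_eq_push, conv_eq_push, ← push_prodMap_prodDist, prodFour]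

lemma push_total_prodFour (p₁ p₂ q₁ q₂ : G → ℝ) :
    push (fun z => z.1.1 + z.1.2 + (z.2.1 + z.2.2)) (prodFour p₁ p₂ q₁ q₂) =
      conv (conv p₁ p₂) (conv q₁ q₂) := by
  rw [conv_eq_push (conv p₁ p₂), ← push_sums_prodFour, push_push]

lemma sumJoint_jointSum (p₁ p₂ q₁ q₂ : G → ℝ) :
    sumJoint (jointSum p₁ p₂) (jointSum q₁ q₂) =
      push (fun z => (z.1.1 + z.2.1, (z.1.1 + z.1.2, z.2.1 + z.2.2))) (prodFour p₁ p₂ q₁ q₂) := by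
  rw [sumJoint, jointSum, jointSum, ← push_prodMap_prodDist, push_push, prodFour]

lemma ent_push_add_total_prodFour {p₁ p₂ q₁ q₂ : G → ℝ} (hp₁ : IsDist p₁) (hp₂ : IsDist p₂)
    (hq₁ : IsDist q₁) (hq₂ : IsDist q₂) :
    ent (push (fun z => (z.1.1 + z.2.1, z.1.1 + z.1.2 + (z.2.1 + z.2.2)))
      (prodFour p₁ p₂ q₁ q₂)) = ent (conv p₁ q₁) + ent (conv p₂ q₂) := by
  rw [← ent_prodDist (hp₁.conv hq₁) (hp₂.conv hq₂), ← push_sums_prodFour,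
    ← push_swap_inner_prodFour, push_push]
  exact ent_push_congr (by grind [Prod.mk.injEq]) _

lemma ent_push_cross_total_prodFour {p₁ p₂ q₁ q₂ : G → ℝ} (hp₁ : IsDist p₁) (hp₂ : IsDist p₂)
    (hq₁ : IsDist q₁) (hq₂ : IsDist q₂) :
    ent (push (fun z => (z.1.1 + z.2.2, z.1.1 + z.1.2 + (z.2.1 + z.2.2)))
      (prodFour p₁ p₂ q₁ q₂)) = ent (conv p₁ q₂) + ent (conv q₁ p₂) := by
  rw [← ent_prodDist (hp₁.conv hq₂) (hq₁.conv hp₂), ← push_sums_prodFour,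
    ← push_swap_outer_prodFour, push_push]
  exact ent_push_congr (by grind [Prod.mk.injEq]) _

lemma sCond_jointSum {p₁ p₂ q₁ q₂ : G → ℝ} (hp₁ : IsDist p₁) (hp₂ : IsDist p₂) (hq₁ : IsDist q₁)
    (hq₂ : IsDist q₂) :
    sCond (jointSum p₁ p₂) (jointSum q₁ q₂) =
      ent p₁ + ent p₂ + ent q₁ + ent q₂ - ent (sumJoint (jointSum p₁ p₂) (jointSum q₁ q₂)) := by
  have hr₁ := hp₁.jointSum hp₂
  have hr₂ := hq₁.jointSum hq₂
  rw [sCond_eq hr₁ hr₂, condEnt_jointSum hp₁ hp₂, condEnt_jointSum hq₁ hq₂,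
    condEnt_eq_ent_sub (hr₁.sumJoint hr₂).nonneg, push_snd_sumJoint, push_snd_jointSum,
    push_snd_jointSum, ent_prodDist (hp₁.conv hp₂) (hq₁.conv hq₂)]
  ring

end FourVariables

section CharTwo

variable {G : Type*} [AddCommGroup G] [Module (ZMod 2) G] [Finite G]

lemma ent_sumJoint_swap (p₁ p₂ q₁ q₂ : G → ℝ) :
    ent (sumJoint (jointSum p₁ p₂) (jointSum q₁ q₂)) =
      ent (sumJoint (jointSum p₁ q₂) (jointSum q₁ p₂)) := by
  rw [sumJoint_jointSum, sumJoint_jointSum, ← push_swap_outer_prodFour, push_push]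
  refine ent_push_congr (fun z z' => ?_) _
  simp only [Prod.mk.injEq, ← ZModModule.sub_eq_add]
  grind

lemma pairInfo_eq {p₁ p₂ q₁ q₂ : G → ℝ} (hp₁ : IsDist p₁) (hp₂ : IsDist p₂) (hq₁ : IsDist q₁)
    (hq₂ : IsDist q₂) :
    pairInfo p₁ p₂ q₁ q₂ =
      ent (conv p₁ q₁) + ent (conv p₂ q₂) + ent (conv p₁ q₂) + ent (conv q₁ p₂)
        - ent (sumJoint (jointSum p₁ p₂) (jointSum q₁ q₂))
        - ent (conv (conv p₁ p₂) (conv q₁ q₂)) := by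
  have triple : ent (push (fun z => (z.1.1 + z.2.1, z.1.1 + z.2.2,
      z.1.1 + z.1.2 + (z.2.1 + z.2.2))) (prodFour p₁ p₂ q₁ q₂)) =
        ent (sumJoint (jointSum p₁ p₂) (jointSum q₁ q₂)) := by
    rw [sumJoint_jointSum]
    refine ent_push_congr (fun z z' => ?_) _
    simp only [Prod.mk.injEq, ← ZModModule.sub_eq_add]
    grind
  rw [pairInfo, condMI_push, triple, ent_push_add_total_prodFour hp₁ hp₂ hq₁ hq₂,
    ent_push_cross_total_prodFour hp₁ hp₂ hq₁ hq₂, push_total_prodFour]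
  ring

lemma pairInfo_swap {p₁ p₂ q₁ q₂ : G → ℝ} (hp₁ : IsDist p₁) (hp₂ : IsDist p₂) (hq₁ : IsDist q₁)
    (hq₂ : IsDist q₂) :
    pairInfo p₁ p₂ q₁ q₂ + ent (conv p₁ p₂) + ent (conv q₁ q₂) =
      pairInfo p₁ q₂ q₁ p₂ + ent (conv p₁ q₂) + ent (conv q₁ p₂) := by
  have total : conv (conv p₁ p₂) (conv q₁ q₂) = conv (conv p₁ q₂) (conv q₁ p₂) := by
    rw [conv_assoc, conv_assoc, conv_comm q₁ q₂, conv_comm q₁ p₂, ← conv_assoc p₂,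
      ← conv_assoc q₂, conv_comm p₂ q₂]
  rw [pairInfo_eq hp₁ hp₂ hq₁ hq₂, pairInfo_eq hp₁ hq₂ hq₁ hp₂, ent_sumJoint_swap, total,
    conv_comm q₂ p₂]
  ring

lemma sDouble_conv_add_sCond_jointSum {p₁ p₂ q₁ q₂ : G → ℝ} (hp₁ : IsDist p₁) (hp₂ : IsDist p₂)
    (hq₁ : IsDist q₁) (hq₂ : IsDist q₂) :
    sDouble (conv p₁ p₂) (conv q₁ q₂) + sCond (jointSum p₁ p₂) (jointSum q₁ q₂) =
      sDouble p₁ q₁ + sDouble p₂ q₂ + pairInfo p₁ q₂ q₁ p₂ := by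
  have swap := pairInfo_swap hp₁ hp₂ hq₁ hq₂
  rw [pairInfo_eq hp₁ hp₂ hq₁ hq₂] at swap
  rw [sCond_jointSum hp₁ hp₂ hq₁ hq₂]
  simp only [sDouble]
  linarith

end CharTwo

lemma sum_mul_dRuzsa_fiber_sumJoint_le {G : Type*} [AddCommGroup G] [Module (ZMod 2) G] [Fintype G]
    {p₁ p₂ q₁ q₂ : G → ℝ} (hp₁ : IsDist p₁) (hp₂ : IsDist p₂) (hq₁ : IsDist q₁) (hq₂ : IsDist q₂) :
    ∑ θ, prodDist (conv p₁ p₂) (conv q₁ q₂) θ *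
        dRuzsa (fiber (sumJoint (jointSum p₁ p₂) (jointSum q₁ q₂)) θ)
          (fiber (sumJoint (jointSum p₁ p₂) (jointSum q₁ q₂)) θ) ≤
      3 * pairInfo p₁ p₂ q₁ q₂ + 2 * ent (conv p₁ p₂) + 2 * ent (conv q₁ q₂)
        - ent (conv p₁ q₁) - ent (conv p₂ q₂) - ent (conv p₁ q₂) - ent (conv q₁ p₂) := by
  have cross (x₁ y₁ y₂ : G) : y₁ + y₂ - (x₁ + y₁) = x₁ + y₂ := by
    rw [add_comm x₁ y₁, add_sub_add_left_eq_sub, ZModModule.sub_eq_add, add_comm]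
  have bound := sum_mul_dRuzsa_fiber_self_le (c := Prod.snd) (σ := fun θ => θ.1 + θ.2)
    ((hp₁.jointSum hp₂).sumJoint (hq₁.jointSum hq₂)) (by grind [Function.Injective])
  rw [push_snd_sumJoint, push_snd_jointSum, push_snd_jointSum,
    ent_prodDist (hp₁.conv hp₂) (hq₁.conv hq₂)] at bound
  simp only [sumJoint_jointSum, push_push, cross] at bound ⊢
  rw [← pairInfo, ent_push_add_total_prodFour hp₁ hp₂ hq₁ hq₂,
    ent_push_cross_total_prodFour hp₁ hp₂ hq₁ hq₂] at bound
  linarith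

lemma sum_mul_dRuzsa_fiber_sumJoint_swap_le {G : Type*} [AddCommGroup G] [Module (ZMod 2) G]
    [Fintype G] {p q : G → ℝ} (hp : IsDist p) (hq : IsDist q) :
    ∑ θ, prodDist (conv p q) (conv q p) θ *
        dRuzsa (fiber (sumJoint (jointSum p q) (jointSum q p)) θ)
          (fiber (sumJoint (jointSum p q) (jointSum q p)) θ) ≤
      2 * pairInfo p q q p + pairInfo p p q q := by
  have bound := sum_mul_dRuzsa_fiber_sumJoint_le hp hq hq hp
  have swap := pairInfo_swap hp hq hq hp
  rw [conv_comm q p] at bound swap ⊢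
  linarith

section Uniform

variable {A : Type*} [Finite A]

lemma isDist_unifOn {s : Set A} (hs : s.Nonempty) : IsDist (unifOn s) := by
  classical
  cases nonempty_fintype A
  have card_ne_zero : (Nat.card s : ℝ) ≠ 0 := by
    have := hs.to_subtype
    exact_mod_cast Nat.card_pos.ne'
  refine isDist_iff_sum.2 ⟨Set.indicator_nonneg fun _ _ => by positivity, ?_⟩
  simp only [unifOn, Set.indicator_apply, Finset.sum_ite, Finset.sum_const, nsmul_eq_mul, mul_zero,
    add_zero, ← Fintype.card_subtype, ← Nat.card_eq_fintype_card]
  exact mul_inv_cancel₀ card_ne_zero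

lemma ent_le_log_card {p : A → ℝ} (hp : IsDist p) {s : Set A} (hs : p.support ⊆ s) :
    ent p ≤ log (Nat.card s) := by
  cases nonempty_fintype A
  have nonempty : s.Nonempty := by
    rw [Set.nonempty_iff_ne_empty]
    rintro rfl
    have h := hp.sum_eq_one
    rw [Function.support_eq_empty_iff.1 (Set.subset_empty_iff.1 hs)] at h
    simp at h
  have card_ne_zero : (Nat.card s : ℝ) ≠ 0 := by
    have := nonempty.to_subtype
    exact_mod_cast Nat.card_pos.ne'
  have hu := isDist_unifOn nonempty
  calc ent p ≤ ∑ a, p a * -log (unifOn s a) := by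
        refine ent_le_sum_mul_neg_log hp.nonneg hu.nonneg (fun a ha => ?_)
          (hu.sum_eq_one.trans hp.sum_eq_one.symm).le
        by_contra hpa
        rw [unifOn, Set.indicator_of_mem (hs hpa)] at ha
        exact inv_ne_zero card_ne_zero ha
    _ = ∑ a, p a * log (Nat.card s) := by
        refine Finset.sum_congr rfl fun a _ => ?_
        by_cases hpa : p a = 0
        · rw [hpa, zero_mul, zero_mul]
        · rw [unifOn, Set.indicator_of_mem (hs hpa), log_inv, neg_neg]
    _ = log (Nat.card s) := hp.sum_mul_const _

lemma ent_unifOn (s : Set A) : ent (unifOn s) = log (Nat.card s) := by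
  classical
  cases nonempty_fintype A
  have total : ent (unifOn s) = Nat.card s * negMulLog (Nat.card s : ℝ)⁻¹ := by
    simp only [ent_eq_sum, unifOn, Set.indicator_apply, apply_ite negMulLog, negMulLog_zero,
      Finset.sum_ite, Finset.sum_const, nsmul_eq_mul, mul_zero, add_zero, ← Fintype.card_subtype,
      ← Nat.card_eq_fintype_card]
  obtain empty | nonempty := eq_or_ne (Nat.card s : ℝ) 0
  · rw [total, empty, zero_mul, log_zero]
  · rw [total, negMulLog, log_inv, neg_mul_neg, mul_inv_cancel_left₀ nonempty]

end Uniform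

section Quotient

variable {R G : Type*} [Ring R] [AddCommGroup G] [Module R G] (V : Submodule R G)

lemma sum_comp_mkQ [Fintype G] [Fintype (G ⧸ V)] (φ : G ⧸ V → ℝ) :
    ∑ x, φ (V.mkQ x) = Nat.card V * ∑ c, φ c := by
  classical
  have coset (c : G ⧸ V) : Fintype.card {x // V.mkQ x = c} = Nat.card V := by
    obtain ⟨y, rfl⟩ := V.mkQ_surjective c
    rw [← Nat.card_eq_fintype_card]
    refine Nat.card_congr ((Equiv.subRight y).subtypeEquiv fun x => ?_)
    rw [V.mkQ_apply, V.mkQ_apply, Submodule.Quotient.eq, Equiv.subRight_apply]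
  rw [← Finset.sum_fiberwise Finset.univ V.mkQ, Finset.mul_sum]
  refine Finset.sum_congr rfl fun c _ => ?_
  rw [Finset.sum_congr rfl fun x hx => congrArg φ (Finset.mem_filter.1 hx).2, Finset.sum_const,
    ← Fintype.card_subtype, coset, nsmul_eq_mul]

variable [Finite G]

lemma isDist_unifOn_submodule : IsDist (unifOn (V : Set G)) :=
  isDist_unifOn ⟨0, V.zero_mem⟩

lemma conv_unifOn_apply (p : G → ℝ) (x : G) :
    conv p (unifOn (V : Set G)) x = push V.mkQ p (V.mkQ x) * (Nat.card V : ℝ)⁻¹ := by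
  classical
  cases nonempty_fintype G
  rw [conv_eq_sum, push_apply, Finset.sum_filter, Finset.sum_mul]
  refine Finset.sum_congr rfl fun y _ => ?_
  have mem_iff : x - y ∈ (V : Set G) ↔ V.mkQ y = V.mkQ x := by
    rw [eq_comm, V.mkQ_apply, V.mkQ_apply, Submodule.Quotient.eq, SetLike.mem_coe]
  simp only [unifOn, Set.indicator_apply, mem_iff, mul_ite, ite_mul, mul_zero, zero_mul,
    SetLike.coe_sort_coe]

lemma ent_conv_unifOn {p : G → ℝ} (hp : IsDist p) :
    ent (conv p (unifOn (V : Set G))) = ent (push V.mkQ p) + ent (unifOn (V : Set G)) := by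
  cases nonempty_fintype G
  cases nonempty_fintype (G ⧸ V)
  have card_ne_zero : (Nat.card V : ℝ) ≠ 0 := by exact_mod_cast Nat.card_pos.ne'
  have scale (t : ℝ) : Nat.card V * negMulLog (t * (Nat.card V : ℝ)⁻¹) =
      negMulLog t + t * log (Nat.card V) := by
    rw [negMulLog_mul, negMulLog, negMulLog, log_inv]
    field_simp
  rw [ent_eq_sum, ent_eq_sum (push V.mkQ p), ent_unifOn]
  simp only [conv_unifOn_apply]
  rw [sum_comp_mkQ V fun c => negMulLog (push V.mkQ p c * (Nat.card V : ℝ)⁻¹)]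
  simp only [Finset.mul_sum, scale, Finset.sum_add_distrib, (hp.push V.mkQ).sum_mul_const,
    SetLike.coe_sort_coe]

end Quotient

section Periods

variable {G : Type*} [AddCommGroup G]

/-- The subgroup of all periods of a function on `G`. -/
def periods {β : Type*} (f : G → β) : AddSubgroup G where
  carrier := {v | Function.Periodic f v}
  zero_mem' := Function.periodic_with_period_zero f
  add_mem' := Function.Periodic.add_period
  neg_mem' := Function.Periodic.neg

variable [Finite G]

lemma conv_unifOn_eq_self {p : G → ℝ} {s : Set G} (hs : s.Nonempty)
    (h : ∀ v ∈ s, Function.Periodic p v) : conv p (unifOn s) = p := by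
  cases nonempty_fintype G
  ext z
  have translate (v : G) : unifOn s v * p (z - v) = unifOn s v * p z := by
    by_cases hv : v ∈ s
    · rw [(h v hv).sub_eq]
    · rw [unifOn, Set.indicator_of_notMem hv, zero_mul, zero_mul]
  rw [conv_comm, conv_eq_sum]
  simp only [translate, (isDist_unifOn hs).sum_mul_const]

lemma sub_mem_periods_of_ent_conv_le {p q : G → ℝ} (hp : IsDist p) (hq : IsDist q)
    (h : ent (conv p q) ≤ ent p) {y y' : G} (hy : q y ≠ 0) (hy' : q y' ≠ 0) :
    y - y' ∈ periods p := by
  cases nonempty_fintype G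
  have jensen (z : G) : ∑ y, q y * negMulLog (p (z - y)) ≤ negMulLog (∑ y, q y * p (z - y)) :=
    concaveOn_negMulLog.le_map_sum (fun y _ => hq.nonneg y) hq.sum_eq_one
      fun _ _ => Set.mem_Ici.2 (hp.nonneg _)
  have total : ∑ z, ∑ y, q y * negMulLog (p (z - y)) = ent p := by
    rw [Finset.sum_comm]
    simp only [← Finset.mul_sum, ← ent_eq_sum fun z => p (z - _), ent_comp_sub_right,
      hq.sum_mul_const]
  have equality (z : G) :
      negMulLog (∑ y, q y * p (z - y)) = ∑ y, q y * negMulLog (p (z - y)) := by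
    refine ((Finset.sum_eq_sum_iff_of_le fun z _ => jensen z).1 (le_antisymm
      (Finset.sum_le_sum fun z _ => jensen z) ?_) z (Finset.mem_univ z)).symm
    rw [conv_comm, ent_eq_sum] at h
    simpa only [total, conv_eq_sum] using h
  intro z
  have translates := (strictConcaveOn_negMulLog.map_sum_eq_iff_of_nonneg (fun y _ => hq.nonneg y)
    hq.sum_eq_one fun _ _ => Set.mem_Ici.2 (hp.nonneg _)).1 (equality (z + y))
  simpa [add_sub_assoc] using (translates (Finset.mem_univ y) hy (Finset.mem_univ y') hy').symm

lemma exists_conv_unifOn_eq_of_dRuzsa_nonpos {p q : G → ℝ} (hp : IsDist p) (hq : IsDist q)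
    (h : dRuzsa p q ≤ 0) :
    ∃ V : AddSubgroup G, conv p (unifOn (V : Set G)) = p ∧ ent p = ent (unifOn (V : Set G)) := by
  cases nonempty_fintype G
  have left := ent_le_ent_conv_left hp hq
  have right := ent_le_ent_conv_right hp hq
  rw [dRuzsa] at h
  have nonempty : (periods p : Set G).Nonempty := ⟨0, (periods p).zero_mem⟩
  have invariant : conv p (unifOn (periods p : Set G)) = p :=
    conv_unifOn_eq_self nonempty fun v hv => hv
  refine ⟨periods p, invariant, le_antisymm ?_ ?_⟩
  · obtain ⟨y, hy⟩ : ∃ y, q y ≠ 0 := by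
      by_contra! hq0
      simpa [hq0] using hq.sum_eq_one
    have coset : q.support ⊆ (Equiv.addRight y) '' (periods p : Set G) := fun y' hy' =>
      ⟨y' - y, sub_mem_periods_of_ent_conv_le hp hq (by linarith) hy' hy, by simp⟩
    have card := ent_le_log_card hq coset
    rw [Nat.card_image_of_injective (Equiv.injective _), ← ent_unifOn] at card
    linarith
  · have mono := ent_le_ent_conv_left hp (isDist_unifOn nonempty)
    rwa [invariant] at mono

end Periods

section TauFunctional

lemma continuous_ent {A : Type*} [Finite A] : Continuous (ent : (A → ℝ) → ℝ) := by
  cases nonempty_fintype A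
  simp only [funext ent_eq_sum]
  fun_prop

variable {G : Type*} [AddCommGroup G]

/-- The functional `d[X; Y] + η (d[X₀; X] + d[X₀; Y])` of `X ∼ p` and `Y ∼ q`, for a reference
variable `X₀ ∼ p₀`. -/
def tau (η : ℝ) (p₀ p q : G → ℝ) : ℝ := dRuzsa p q + η * (dRuzsa p₀ p + dRuzsa p₀ q)

/-- The pair `(p, q)` minimises `tau η p₀` over all pairs of distributions. -/
structure IsTauMin (η : ℝ) (p₀ p q : G → ℝ) : Prop where
  left : IsDist p
  right : IsDist q
  tau_le : ∀ {p' q' : G → ℝ}, IsDist p' → IsDist q' → tau η p₀ p q ≤ tau η p₀ p' q'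

lemma continuous_dRuzsa [Finite G] : Continuous fun z : (G → ℝ) × (G → ℝ) => dRuzsa z.1 z.2 := by
  cases nonempty_fintype G
  have cont_conv : Continuous fun z : (G → ℝ) × (G → ℝ) => conv z.1 z.2 := by
    refine continuous_pi fun a => ?_
    simp only [conv_eq_sum]
    fun_prop
  exact ((continuous_ent.comp cont_conv).sub
    ((continuous_ent.comp continuous_fst).div_const 2)).sub
    ((continuous_ent.comp continuous_snd).div_const 2)

lemma exists_isTauMin [Finite G] (η : ℝ) {p₀ : G → ℝ} (h₀ : IsDist p₀) :
    ∃ p q, IsTauMin η p₀ p q := by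
  cases nonempty_fintype G
  have mem_iff (p : G → ℝ) : p ∈ stdSimplex ℝ G ↔ IsDist p := isDist_iff_sum.symm
  have cont : Continuous fun z : (G → ℝ) × (G → ℝ) => tau η p₀ z.1 z.2 :=
    continuous_dRuzsa.add (((continuous_dRuzsa.comp (continuous_const.prodMk continuous_fst)).add
      (continuous_dRuzsa.comp (continuous_const.prodMk continuous_snd))).const_mul η)
  obtain ⟨⟨p, q⟩, ⟨hp, hq⟩, hmin⟩ :=
    ((isCompact_stdSimplex ℝ G).prod (isCompact_stdSimplex ℝ G)).exists_isMinOn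
      ⟨(p₀, p₀), (mem_iff _).2 h₀, (mem_iff _).2 h₀⟩ cont.continuousOn
  exact ⟨p, q, (mem_iff _).1 hp, (mem_iff _).1 hq,
    fun {p' q'} hp' hq' => hmin (a := (p', q')) ⟨(mem_iff _).2 hp', (mem_iff _).2 hq'⟩⟩

end TauFunctional

section TauMinimizer

variable {G U W : Type*} [AddCommGroup G] [Finite G] {η : ℝ} {p₀ p q : G → ℝ}

lemma sum_mul_dRuzsa_fiber_le [Fintype U] {r : G × U → ℝ} (hr : IsDist r) (h₀ : IsDist p₀) :
    ∑ u, push Prod.snd r u * dRuzsa p₀ (fiber r u) ≤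
      ent (conv p₀ (push Prod.fst r)) - ent p₀ / 2 - condEnt r / 2 := by
  cases nonempty_fintype G
  have hU := hr.push Prod.snd
  have mixture : conv p₀ (push Prod.fst r) =
      fun a => ∑ u, push Prod.snd r u * conv p₀ (fiber r u) a := by
    ext a
    simp only [conv_eq_sum, push_fst_apply_eq_sum_fiber hr.nonneg, Finset.mul_sum,
      mul_left_comm (p₀ _)]
    exact Finset.sum_comm
  have concave : ∑ u, push Prod.snd r u * ent (conv p₀ (fiber r u)) ≤
      ent (conv p₀ (push Prod.fst r)) := by
    rw [mixture]
    refine sum_mul_ent_le_ent_sum hU fun u a => ?_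
    rw [conv_eq_sum]
    exact Finset.sum_nonneg fun x _ => mul_nonneg (h₀.nonneg x) (fiber_nonneg hr.nonneg _ _)
  simp only [dRuzsa, mul_sub, mul_div_assoc', Finset.sum_sub_distrib, ← Finset.sum_div,
    hU.sum_mul_const, ← condEnt_eq_sum]
  linarith

lemma IsTauMin.tau_le_condEnt [Finite U] [Finite W] (h : IsTauMin η p₀ p q) (hη : 0 ≤ η)
    (h₀ : IsDist p₀) {r₁ : G × U → ℝ} {r₂ : G × W → ℝ} (h₁ : IsDist r₁) (h₂ : IsDist r₂) :
    tau η p₀ p q ≤ condEnt (sumJoint r₁ r₂) - condEnt r₁ / 2 - condEnt r₂ / 2 +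
      η * ((ent (conv p₀ (push Prod.fst r₁)) - ent p₀ / 2 - condEnt r₁ / 2) +
        (ent (conv p₀ (push Prod.fst r₂)) - ent p₀ / 2 - condEnt r₂ / 2)) := by
  cases nonempty_fintype U
  cases nonempty_fintype W
  have hU := h₁.push Prod.snd
  have hW := h₂.push Prod.snd
  have average : tau η p₀ p q ≤ ∑ θ, prodDist (push Prod.snd r₁) (push Prod.snd r₂) θ *
      tau η p₀ (fiber r₁ θ.1) (fiber r₂ θ.2) :=
    (hU.prodDist hW).le_sum_mul fun θ hθ =>
      h.tau_le (isDist_fiber h₁.nonneg (left_ne_zero_of_mul hθ))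
        (isDist_fiber h₂.nonneg (right_ne_zero_of_mul hθ))
  simp only [tau, mul_add, mul_left_comm _ η, Finset.sum_add_distrib, ← Finset.mul_sum,
    sum_mul_dRuzsa_fiber_eq h₁ h₂] at average
  rw [sum_prodDist_mul_fst _ hW fun u => dRuzsa p₀ (fiber r₁ u),
    sum_prodDist_mul_snd hU _ fun w => dRuzsa p₀ (fiber r₂ w)] at average
  have left := mul_le_mul_of_nonneg_left (sum_mul_dRuzsa_fiber_le h₁ h₀) hη
  have right := mul_le_mul_of_nonneg_left (sum_mul_dRuzsa_fiber_le h₂ h₀) hη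
  simp only [tau]
  linarith

lemma IsTauMin.tau_le_sum_dRuzsa_fiber [Fintype U] (h : IsTauMin η p₀ p q) (hη : 0 ≤ η)
    (h₀ : IsDist p₀) {r : G × U → ℝ} (hr : IsDist r) :
    tau η p₀ p q ≤ ∑ u, push Prod.snd r u * dRuzsa (fiber r u) (fiber r u) +
      2 * η * (ent (conv p₀ (push Prod.fst r)) - ent p₀ / 2 - condEnt r / 2) := by
  have tau_self (u : U) : tau η p₀ (fiber r u) (fiber r u) =
      dRuzsa (fiber r u) (fiber r u) + 2 * η * dRuzsa p₀ (fiber r u) := by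
    rw [tau]
    ring
  have average : tau η p₀ p q ≤ ∑ u, push Prod.snd r u * tau η p₀ (fiber r u) (fiber r u) :=
    (hr.push Prod.snd).le_sum_mul fun u hu =>
      h.tau_le (isDist_fiber hr.nonneg hu) (isDist_fiber hr.nonneg hu)
  simp only [tau_self, mul_add, mul_left_comm _ (2 * η), Finset.sum_add_distrib,
    ← Finset.mul_sum] at average
  have bound := mul_le_mul_of_nonneg_left (sum_mul_dRuzsa_fiber_le hr h₀) hη
  linarith

lemma IsTauMin.le_condEnt_sumJoint (h : IsTauMin η p₀ p q) (hη : 0 ≤ η) (h₀ : IsDist p₀) :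
    (ent p + ent q) / 2 - η * dRuzsa p q ≤ condEnt (sumJoint (jointSum p q) (jointSum q p)) := by
  have fibers := h.tau_le_condEnt hη h₀ (h.left.jointSum h.right) (h.right.jointSum h.left)
  rw [condEnt_jointSum h.left h.right, condEnt_jointSum h.right h.left,
    push_fst_jointSum _ h.left, push_fst_jointSum _ h.right] at fibers
  simp only [tau, dRuzsa, conv_comm q p] at fibers ⊢
  linarith

variable [Module (ZMod 2) G]

lemma IsTauMin.pairInfo_add_le (h : IsTauMin η p₀ p q) (hη : 0 ≤ η) (h₀ : IsDist p₀)
    {p₁ p₂ q₁ q₂ : G → ℝ} (hp₁ : IsDist p₁) (hp₂ : IsDist p₂) (hq₁ : IsDist q₁)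
    (hq₂ : IsDist q₂) :
    pairInfo p₁ p₂ q₁ q₂ + 2 * tau η p₀ p q ≤
      dRuzsa p₁ q₁ + dRuzsa p₂ q₂ + dRuzsa p₁ q₂ + dRuzsa q₁ p₂ - dRuzsa p₁ p₂ - dRuzsa q₁ q₂ +
        η * (2 * dRuzsa p₀ p₁ + 2 * dRuzsa p₀ q₁ + dRuzsa p₁ p₂ + dRuzsa q₁ q₂) := by
  have fibers := h.tau_le_condEnt hη h₀ (hp₁.jointSum hp₂) (hq₁.jointSum hq₂)
  have sums := h.tau_le (hp₁.conv hp₂) (hq₁.conv hq₂)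
  have kv_left := mul_le_mul_of_nonneg_left (ent_conv_conv_add_ent_le h₀ hp₁ hp₂) hη
  have kv_right := mul_le_mul_of_nonneg_left (ent_conv_conv_add_ent_le h₀ hq₁ hq₂) hη
  rw [condEnt_eq_ent_sub ((hp₁.jointSum hp₂).sumJoint (hq₁.jointSum hq₂)).nonneg,
    push_snd_sumJoint, push_snd_jointSum, push_snd_jointSum,
    ent_prodDist (hp₁.conv hp₂) (hq₁.conv hq₂), condEnt_jointSum hp₁ hp₂,
    condEnt_jointSum hq₁ hq₂, push_fst_jointSum _ hp₂, push_fst_jointSum _ hq₂] at fibers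
  rw [pairInfo_eq hp₁ hp₂ hq₁ hq₂]
  simp only [tau, dRuzsa, conv_assoc] at fibers sums kv_left kv_right ⊢
  linarith

lemma IsTauMin.pairInfo_le (h : IsTauMin η p₀ p q) (hη : 0 ≤ η) (h₀ : IsDist p₀) :
    pairInfo p q q p ≤ 4 * η * dRuzsa p q := by
  have fibring := h.pairInfo_add_le hη h₀ h.left h.left h.right h.right
  have swap := pairInfo_swap h.left h.right h.right h.left
  have self_p := mul_le_mul_of_nonneg_left (dRuzsa_self_le h.left h.right) hη
  have self_q := mul_le_mul_of_nonneg_left (dRuzsa_self_le h.right h.left) hη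
  simp only [tau, dRuzsa, conv_comm q p] at fibring swap self_p self_q ⊢
  linarith

lemma IsTauMin.pairInfo_self_le (h : IsTauMin η p₀ p q) (hη : 0 ≤ η) (h₀ : IsDist p₀) :
    pairInfo p p q q ≤ 2 * η * dRuzsa p q := by
  have fibring := h.pairInfo_add_le hη h₀ h.left h.right h.right h.left
  have swap := pairInfo_swap h.left h.right h.right h.left
  simp only [tau, dRuzsa, conv_comm q p] at fibring swap ⊢
  linarith

lemma IsTauMin.dRuzsa_le (h : IsTauMin η p₀ p q) (hη : 0 ≤ η) (h₀ : IsDist p₀) :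
    dRuzsa p q ≤ (12 * η + η ^ 2) * dRuzsa p q := by
  cases nonempty_fintype G
  have hp := h.left
  have hq := h.right
  have average := h.tau_le_sum_dRuzsa_fiber hη h₀ ((hp.jointSum hq).sumJoint (hq.jointSum hp))
  rw [push_fst_sumJoint, push_fst_jointSum _ hq, push_fst_jointSum _ hp, push_snd_sumJoint,
    push_snd_jointSum, push_snd_jointSum] at average
  have fibers := sum_mul_dRuzsa_fiber_sumJoint_swap_le hp hq
  have info := h.pairInfo_le hη h₀
  have info_self := h.pairInfo_self_le hη h₀
  have cond := mul_le_mul_of_nonneg_left (h.le_condEnt_sumJoint hη h₀) hη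
  have kv_left := mul_le_mul_of_nonneg_left (ent_conv_conv_add_ent_le h₀ hp hq) hη
  have kv_right := mul_le_mul_of_nonneg_left (ent_conv_conv_add_ent_le h₀ hq hp) hη
  simp only [conv_assoc, conv_comm q p] at kv_left kv_right
  simp only [tau] at average
  simp only [dRuzsa] at *
  linarith

lemma IsTauMin.dRuzsa_nonpos (h : IsTauMin η p₀ p q) (hη : 0 ≤ η) (hη' : 12 * η + η ^ 2 < 1)
    (h₀ : IsDist p₀) : dRuzsa p q ≤ 0 := by
  have contraction := h.dRuzsa_le hη h₀
  nlinarith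

end TauMinimizer

section EntropicPFR

variable {G : Type*} [AddCommGroup G] [Finite G]

lemma exists_dRuzsa_unifOn_le {p₀ p q : G → ℝ} (h₀ : IsDist p₀) (hp : IsDist p) (hq : IsDist q)
    (hpq : dRuzsa p q ≤ 0) :
    ∃ V : AddSubgroup G, dRuzsa p₀ (unifOn (V : Set G)) ≤ dRuzsa p₀ p := by
  obtain ⟨V, absorb, ent_eq⟩ := exists_conv_unifOn_eq_of_dRuzsa_nonpos hp hq hpq
  have hV : IsDist (unifOn (V : Set G)) := isDist_unifOn ⟨0, V.zero_mem⟩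
  have mono : ent (conv p₀ (unifOn (V : Set G))) ≤ ent (conv p₀ p) := by
    rw [← absorb, conv_comm p, ← conv_assoc]
    exact ent_le_ent_conv_right (h₀.conv hV) hp
  refine ⟨V, ?_⟩
  rw [dRuzsa, dRuzsa, ← ent_eq]
  linarith

lemma IsTauMin.add_dRuzsa_le {η : ℝ} {p₀ p q : G → ℝ} (h : IsTauMin η p₀ p q) (h₀ : IsDist p₀) :
    η * (dRuzsa p₀ p + dRuzsa p₀ q) ≤ (1 + 2 * η) * dRuzsa p₀ p₀ := by
  have compare := h.tau_le h₀ h₀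
  have nonneg := dRuzsa_nonneg h.left h.right
  simp only [tau] at compare
  linarith

variable [Module (ZMod 2) G]

-- `η = 1 / 13` is an admissible weight: `12 / 13 + 1 / 169 < 1`.
lemma exists_submodule_dRuzsa_unifOn_le {p₀ : G → ℝ} (h₀ : IsDist p₀) :
    ∃ V : Submodule (ZMod 2) G,
      dRuzsa p₀ (unifOn (V : Set G)) ≤ 15 / 2 * dRuzsa p₀ p₀ := by
  obtain ⟨p, q, h⟩ := exists_isTauMin (1 / 13) h₀
  have close : dRuzsa p q ≤ 0 := h.dRuzsa_nonpos (by norm_num) (by norm_num) h₀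
  have sum_le := h.add_dRuzsa_le h₀
  suffices ∃ V : AddSubgroup G, dRuzsa p₀ (unifOn (V : Set G)) ≤ 15 / 2 * dRuzsa p₀ p₀ from
    this.imp' (AddSubgroup.toZModSubmodule 2) fun V hV => hV
  rcases le_total (dRuzsa p₀ p) (dRuzsa p₀ q) with hpq | hqp
  · obtain ⟨V, hV⟩ := exists_dRuzsa_unifOn_le h₀ h.left h.right close
    exact ⟨V, by linarith⟩
  · obtain ⟨V, hV⟩ := exists_dRuzsa_unifOn_le h₀ h.right h.left (dRuzsa_comm p q ▸ close)
    exact ⟨V, by linarith⟩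

lemma exists_submodule_ent_push_mkQ_le_dRuzsa {p₀ : G → ℝ} (h₀ : IsDist p₀) :
    ∃ V : Submodule (ZMod 2) G,
      ent (unifOn (V : Set G)) ≤ 7 * ent p₀ ∧ ent (push V.mkQ p₀) ≤ 15 * dRuzsa p₀ p₀ := by
  cases nonempty_fintype G
  obtain ⟨V, hV⟩ := exists_submodule_dRuzsa_unifOn_le h₀
  have hU := isDist_unifOn_submodule V
  have lower_V := ent_le_ent_conv_left h₀ hU
  have lower_p := ent_le_ent_conv_right h₀ hU
  have quotient := ent_conv_unifOn V h₀
  rw [dRuzsa] at hV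
  rcases le_total (15 * dRuzsa p₀ p₀) (6 * ent p₀) with small | large
  · exact ⟨V, by linarith, by linarith⟩
  · have nonneg := ent_nonneg h₀
    refine ⟨⊥, ?_, (ent_push_le _ h₀).trans (by linarith)⟩
    simpa [ent_unifOn] using nonneg

lemma push_mkQ_conv (V : Submodule (ZMod 2) G) (p q : G → ℝ) :
    push V.mkQ (conv p q) = conv (push V.mkQ p) (push V.mkQ q) := by
  cases nonempty_fintype G
  simp only [conv_eq_push, push_push, map_add, ← push_prodMap_prodDist]

lemma exists_submodule_ent_push_mkQ_add_le {p q : G → ℝ} (hp : IsDist p) (hq : IsDist q) :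
    ∃ V : Submodule (ZMod 2) G,
      ent (unifOn (V : Set G)) ≤ 7 * (ent p + ent q) ∧
      ent (push V.mkQ p) + ent (push V.mkQ q) ≤ 30 * dRuzsa (conv p q) (conv p q) := by
  cases nonempty_fintype G
  obtain ⟨V, hV, quotient⟩ := exists_submodule_ent_push_mkQ_le_dRuzsa (hp.conv hq)
  have subadd := ent_conv_le_add hp hq
  rw [push_mkQ_conv] at quotient
  have left := ent_le_ent_conv_left (hp.push V.mkQ) (hq.push V.mkQ)
  have right := ent_le_ent_conv_right (hp.push V.mkQ) (hq.push V.mkQ)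
  exact ⟨V, by linarith, by linarith⟩

end EntropicPFR

section Endgame

variable {G : Type*} [AddCommGroup G] [Finite G]

lemma sDouble_comm (p q : G → ℝ) : sDouble p q = sDouble q p := by
  rw [sDouble, sDouble, conv_comm, add_comm (ent p)]

lemma isDist_fiber_jointSum {p q : G → ℝ} (hp : IsDist p) (hq : IsDist q) {u : G}
    (hu : conv p q u ≠ 0) : IsDist (fiber (jointSum p q) u) :=
  isDist_fiber (hp.jointSum hq).nonneg (by rwa [push_snd_jointSum])

variable [Module (ZMod 2) G] {η κ : ℝ}

lemma pairInfo_le_of_sDouble_le {p₁ p₂ q₁ q₂ : G → ℝ} (hp₁ : IsDist p₁) (hp₂ : IsDist p₂)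
    (hq₁ : IsDist q₁) (hq₂ : IsDist q₂) (hs₁ : η * (ent p₁ + ent q₁) ≤ sDouble p₁ q₁)
    (hs₂ : η * (ent p₂ + ent q₂) ≤ sDouble p₂ q₂)
    (h_sum : sDouble (conv p₁ p₂) (conv q₁ q₂) ≤
      η * (ent (conv p₁ p₂) + ent (conv q₁ q₂)) + κ)
    (h_fiber : sCond (jointSum p₁ p₂) (jointSum q₁ q₂) ≤
      η * (condEnt (jointSum p₁ p₂) + condEnt (jointSum q₁ q₂)) + κ) :
    pairInfo p₁ q₂ q₁ p₂ ≤ 2 * κ := by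
  have fibring := sDouble_conv_add_sCond_jointSum hp₁ hp₂ hq₁ hq₂
  rw [condEnt_jointSum hp₁ hp₂, condEnt_jointSum hq₁ hq₂] at h_fiber
  linarith

lemma exists_submodule_ent_push_mkQ_fiber_add_le {p q : G → ℝ} (hp : IsDist p) (hq : IsDist q)
    {u w : G} (hu : conv p q u ≠ 0) (hw : conv q p w ≠ 0) :
    ∃ V : Submodule (ZMod 2) G,
      ent (unifOn (V : Set G)) ≤
        7 * (ent (fiber (jointSum p q) u) + ent (fiber (jointSum q p) w)) ∧
      ent (push V.mkQ (fiber (jointSum p q) u)) + ent (push V.mkQ (fiber (jointSum q p) w)) ≤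
        30 * dRuzsa (fiber (sumJoint (jointSum p q) (jointSum q p)) (u, w))
          (fiber (sumJoint (jointSum p q) (jointSum q p)) (u, w)) := by
  rw [fiber_sumJoint]
  exact exists_submodule_ent_push_mkQ_add_le (isDist_fiber_jointSum hp hq hu)
    (isDist_fiber_jointSum hq hp hw)

theorem statement12_general {p q : G → ℝ} (hp : IsDist p) (hq : IsDist q)
    (hs : sDouble p q ≥ η * (ent p + ent q))
    (h1 : sDouble (conv p p) (conv q q) ≤ η * (ent (conv p p) + ent (conv q q)) + κ)
    (h2 : sDouble (conv p q) (conv p q) ≤ η * (ent (conv p q) + ent (conv p q)) + κ)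
    (h3 : sCond (jointSum p p) (jointSum q q) ≤
      η * (condEnt (jointSum p p) + condEnt (jointSum q q)) + κ)
    (h4 : sCond (jointSum p q) (jointSum q p) ≤
      η * (condEnt (jointSum p q) + condEnt (jointSum q p)) + κ) :
    ∃ Vf : G → G → Submodule (ZMod 2) G,
      (∀ u ∈ Function.support (conv p q), ∀ w ∈ Function.support (conv q p),
        ent (unifOn (Vf u w : Set G)) ≤
          7 * (ent (fiber (jointSum p q) u) + ent (fiber (jointSum q p) w))) ∧
      (∑ᶠ u, ∑ᶠ w, conv p q u * conv q p w *
          (ent (push (Vf u w).mkQ (fiber (jointSum p q) u)) +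
            ent (push (Vf u w).mkQ (fiber (jointSum q p) w)))) ≤ 180 * κ := by
  cases nonempty_fintype G
  have exists_V (u : G) (hu : u ∈ Function.support (conv p q)) (w : G)
      (hw : w ∈ Function.support (conv q p)) :=
    exists_submodule_ent_push_mkQ_fiber_add_le hp hq hu hw
  choose! Vf h_card h_quotient using exists_V
  have info : pairInfo p q q p ≤ 2 * κ := pairInfo_le_of_sDouble_le hp hp hq hq hs hs h1 h3
  have info_self : pairInfo p p q q ≤ 2 * κ := pairInfo_le_of_sDouble_le hp hq hq hp hs
    (by rwa [sDouble_comm, add_comm]) (by rwa [conv_comm q p]) h4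
  have fibers := sum_mul_dRuzsa_fiber_sumJoint_swap_le hp hq
  refine ⟨Vf, h_card, ?_⟩
  rw [finsum_finsum_mul]
  refine (((hp.conv hq).prodDist (hq.conv hp)).sum_mul_le_sum_mul fun θ hθ =>
    h_quotient θ.1 (left_ne_zero_of_mul hθ) θ.2 (right_ne_zero_of_mul hθ)).trans ?_
  simp only [mul_left_comm _ (30 : ℝ), ← Finset.mul_sum]
  linarith

end Endgame

/-- **Endgame Lemma.** -/
theorem statement12 (n : ℕ) (η κ : ℝ) (hη : η ∈ Set.Ioc (0 : ℝ) (1 / 2)) (hκ : 0 < κ)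
    (p q : Fvec n → ℝ) (hp : IsDist p) (hq : IsDist q)
    (hs : sDouble p q ≥ η * (ent p + ent q))
    (h1 : sDouble (conv p p) (conv q q) ≤ η * (ent (conv p p) + ent (conv q q)) + κ)
    (h2 : sDouble (conv p q) (conv p q) ≤ η * (ent (conv p q) + ent (conv p q)) + κ)
    (h3 : sCond (jointSum p p) (jointSum q q) ≤
      η * (condEnt (jointSum p p) + condEnt (jointSum q q)) + κ)
    (h4 : sCond (jointSum p q) (jointSum q p) ≤
      η * (condEnt (jointSum p q) + condEnt (jointSum q p)) + κ) :
    ∃ Vf : Fvec n → Fvec n → Submodule (ZMod 2) (Fvec n),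
      (∀ u ∈ Function.support (conv p q), ∀ w ∈ Function.support (conv q p),
        ent (unifOn ((Vf u w) : Set (Fvec n))) ≤
          7 * (ent (fiber (jointSum p q) u) + ent (fiber (jointSum q p) w))) ∧
      (∑ᶠ u, ∑ᶠ w, conv p q u * conv q p w *
          (ent (push (Vf u w).mkQ (fiber (jointSum p q) u)) +
            ent (push (Vf u w).mkQ (fiber (jointSum q p) w)))) ≤ 480 * κ := by
  obtain ⟨Vf, h_card, h_quotient⟩ := statement12_general hp hq hs h1 h2 h3 h4
  exact ⟨Vf, h_card, h_quotient.trans (by linarith)⟩
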